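/- Every 2-edge-connected simple graph on n vertices can be covered by at most ⌊3(n−1)/4⌋ cycles. -/

import Mathlib

/-!
Among the bridgeless counterexamples, connected or not and with isolated vertices left out of the
count, consider one with the fewest nonisolated vertices.

Cycle covers pull back along the Kelmans shift from `a` to a neighbour `b`, and the shift creates no
bridges if `a` and `b` have a common neighbour. Shifting towards vertices of larger rank as long as
possible, one may assume that any two such vertices have nested neighbourhoods. If there is a
triangle, then the vertex `b₁` of largest rank that lies in one is a cut vertex, and induction
applies to both sides, or `b₁` and a second vertex `b₂` dominate the graph. In the latter case some
vertices of odd degree in the rest are joined in pairs by paths, two disjoint paths are closed to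
one cycle through `b₁` and `b₂`, and what remains decomposes by Lovász's theorem into paths, each of
which is closed through `b₁`. The count fails only if three leaves of the rest have the same
neighbour; these are covered by two hexagons and removed.

Without triangles, contract two opposite edges of a 4-cycle or, if there is none, two consecutive
edges of some cycle. A cover of the result, bridges deleted, pulls back, and the cycle itself covers
the remaining edges: one cycle pays for two vertices.
-/

namespace CycleCover

open SimpleGraph

variable {V : Type*}

/-! ### Cycles as lists of vertices -/

/-- The edges, in order, of the walk that visits the vertices of a list one after the other. -/
def pathEdges : List V → List (Sym2 V)
  | [] => []
  | [_] => []
  | a :: b :: l => s(a, b) :: pathEdges (b :: l)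

/-- The edges of the closed walk obtained by joining the last vertex of a list to the first. -/
def cycleEdges : List V → List (Sym2 V)
  | [] => []
  | a :: l => pathEdges (a :: (l ++ [a]))

/-- A cycle of `G`, encoded by the list of its vertices in cyclic order. -/
structure IsCycleList (G : SimpleGraph V) (c : List V) : Prop where
  nodup : c.Nodup
  three_le_length : 3 ≤ c.length
  mem_edgeSet : ∀ e ∈ cycleEdges c, e ∈ G.edgeSet

/-- The edge `e` lies on one of the cycles in the family `L`. -/
def Covers (L : List (List V)) (e : Sym2 V) : Prop := ∃ c ∈ L, e ∈ cycleEdges c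

@[simp] lemma pathEdges_nil : pathEdges ([] : List V) = [] := rfl

@[simp] lemma pathEdges_singleton (a : V) : pathEdges [a] = [] := rfl

@[simp] lemma pathEdges_cons_cons (a b : V) (l : List V) :
    pathEdges (a :: b :: l) = s(a, b) :: pathEdges (b :: l) := rfl

lemma cycleEdges_cons (a : V) (l : List V) : cycleEdges (a :: l) = pathEdges (a :: (l ++ [a])) :=
  rfl

lemma pathEdges_append_cons (l : List V) (a : V) (m : List V) :
    pathEdges (l ++ a :: m) = pathEdges (l ++ [a]) ++ pathEdges (a :: m) := by
  induction l with
  | nil => simp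
  | cons x l ih => cases l with
    | nil => simp
    | cons y l => simpa using ih

lemma pathEdges_reverse (l : List V) : pathEdges l.reverse = (pathEdges l).reverse := by
  induction l with
  | nil => rfl
  | cons x l ih => cases l with
    | nil => rfl
    | cons y l =>
      simp only [List.reverse_cons, pathEdges_cons_cons] at ih ⊢
      rw [List.append_assoc, List.singleton_append, pathEdges_append_cons, ih]
      simp [Sym2.eq_swap]

lemma pathEdges_cons (x : V) {l : List V} (hl : l ≠ []) :
    pathEdges (x :: l) = s(x, l.head hl) :: pathEdges l := by
  cases l with
  | nil => exact absurd rfl hl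
  | cons y l => rfl

lemma pathEdges_concat (x : V) {l : List V} (hl : l ≠ []) :
    pathEdges (l ++ [x]) = pathEdges l ++ [s(l.getLast hl, x)] := by
  obtain ⟨m, y, rfl⟩ := List.eq_nil_or_concat'  l |>.resolve_left hl
  rw [List.append_assoc, List.singleton_append, pathEdges_append_cons]
  simp

lemma mem_of_mem_pathEdges {l : List V} {e : Sym2 V} (h : e ∈ pathEdges l) {v : V} (hv : v ∈ e) :
    v ∈ l := by
  induction l with
  | nil => simp at h
  | cons x l ih => cases l with
    | nil => simp at h
    | cons y l =>
      rcases List.mem_cons.1 h with rfl | h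
      · rcases Sym2.mem_iff.1 hv with rfl | rfl <;> simp
      · exact List.mem_cons_of_mem _ (ih h)

lemma mem_of_mem_cycleEdges {l : List V} {e : Sym2 V} (h : e ∈ cycleEdges l) {v : V}
    (hv : v ∈ e) : v ∈ l := by
  cases l with
  | nil => simp [cycleEdges] at h
  | cons x l =>
    have := mem_of_mem_pathEdges h hv
    grind

lemma cycleEdges_cons_append_cons (a : V) (l : List V) (b : V) (m : List V) :
    cycleEdges (a :: (l ++ b :: m)) =
      pathEdges (a :: (l ++ [b])) ++ pathEdges (b :: (m ++ [a])) := by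
  simpa [cycleEdges] using pathEdges_append_cons (a :: l) b (m ++ [a])

lemma cycleEdges_append_perm (l m : List V) :
    (cycleEdges (l ++ m)).Perm (cycleEdges (m ++ l)) := by
  cases l with
  | nil => simp
  | cons a l => cases m with
    | nil => simp
    | cons b m =>
      simp only [List.cons_append, cycleEdges_cons_append_cons]
      exact List.perm_append_comm

lemma cycleEdges_perm_of_isRotated {l m : List V} (h : l ~r m) :
    (cycleEdges l).Perm (cycleEdges m) := by
  obtain ⟨n, hn, rfl⟩ := List.isRotated_iff_mod.1 h
  rw [List.rotate_eq_drop_append_take hn]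
  simpa using cycleEdges_append_perm (l.take n) (l.drop n)

lemma covers_append {L M : List (List V)} {e : Sym2 V} :
    Covers (L ++ M) e ↔ Covers L e ∨ Covers M e := by
  simp only [Covers, List.mem_append, or_and_right, exists_or]

lemma covers_cons {c : List V} {M : List (List V)} {e : Sym2 V} :
    Covers (c :: M) e ↔ e ∈ cycleEdges c ∨ Covers M e := by
  simp [Covers]

namespace IsCycleList

variable {G H : SimpleGraph V} {c d : List V}

lemma mono (hc : IsCycleList G c) (h : G ≤ H) : IsCycleList H c :=
  ⟨hc.nodup, hc.three_le_length, fun e he => edgeSet_mono h (hc.mem_edgeSet e he)⟩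

lemma of_isRotated (hc : IsCycleList G c) (h : c ~r d) : IsCycleList G d :=
  ⟨h.nodup_iff.1 hc.nodup, h.perm.length_eq ▸ hc.three_le_length,
    fun e he => hc.mem_edgeSet e ((cycleEdges_perm_of_isRotated h).mem_iff.2 he)⟩

end IsCycleList

lemma pathEdges_support {G : SimpleGraph V} {a b : V} (w : G.Walk a b) :
    pathEdges w.support = w.edges := by
  induction w with
  | nil => rfl
  | cons h p ih =>
    rw [Walk.support_cons, pathEdges_cons _ p.support_ne_nil, ih, Walk.edges_cons]
    simp

lemma isChain_adj_iff {G : SimpleGraph V} {l : List V} :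
    l.IsChain G.Adj ↔ ∀ e ∈ pathEdges l, e ∈ G.edgeSet := by
  induction l with
  | nil => simp
  | cons a l ih => cases l with
    | nil => simp
    | cons b l => simp [ih]

lemma IsCycleList.exists_isCycle {G : SimpleGraph V} {c : List V} (hc : IsCycleList G c) :
    ∃ w : Σ v : V, G.Walk v v, w.2.IsCycle ∧ w.2.edges = cycleEdges c := by
  obtain _ | ⟨a, l⟩ := c
  · simpa using hc.three_le_length
  have hchain : (a :: (l ++ [a])).IsChain G.Adj := isChain_adj_iff.2 hc.mem_edgeSet
  obtain ⟨w, hw⟩ : ∃ w : G.Walk a a, w.support = a :: (l ++ [a]) :=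
    ⟨(Walk.ofSupport _ (List.cons_ne_nil _ _) hchain).copy rfl (by simp),
      (Walk.support_copy _ _ _).trans (Walk.support_ofSupport _ hchain)⟩
  have hlen : 3 ≤ w.length := by
    have := w.length_support
    have := hc.three_le_length
    simp only [hw, List.length_cons, List.length_append, List.length_nil] at *
    omega
  have hpath : w.tail.IsPath := by
    rw [Walk.isPath_def, Walk.support_tail_of_not_nil _ (Walk.not_nil_iff_lt_length.2 (by omega)),
      hw]
    exact (List.perm_append_singleton a l).nodup_iff.2 hc.nodup
  exact ⟨⟨a, w⟩, Walk.isCycle_iff_isPath_tail_and_le_length.2 ⟨hpath, hlen⟩, by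
    rw [← pathEdges_support, hw, cycleEdges_cons]⟩

/-! ### Bridgeless graphs and small covers -/

/-- A graph, connected or not, without bridges. -/
def Bridgeless (G : SimpleGraph V) : Prop := ∀ ⦃u v⦄, G.Adj u v → ¬ G.IsBridge s(u, v)

/-- The family `L` of cycles of `G` covers all edges of `G`. -/
structure IsCycleCover (G : SimpleGraph V) (L : List (List V)) : Prop where
  isCycleList : ∀ c ∈ L, IsCycleList G c
  covers : ∀ ⦃u v⦄, G.Adj u v → Covers L s(u, v)

/-- `G` satisfies the bound of the theorem, with isolated vertices left out of the count. -/
def HasSmallCover (G : SimpleGraph V) : Prop :=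
  ∃ L, IsCycleCover G L ∧ 4 * L.length ≤ 3 * (G.support.ncard - 1)

/-- The edges of `G` within `s`, as a graph on the same vertices. -/
def restrict (G : SimpleGraph V) (s : Set V) : SimpleGraph V := (G.induce s).spanningCoe

/-- `G` with all its bridges deleted. -/
def deleteBridges (G : SimpleGraph V) : SimpleGraph V := G.deleteEdges {e | G.IsBridge e}

lemma restrict_adj {G : SimpleGraph V} {s : Set V} {x y : V} :
    (restrict G s).Adj x y ↔ G.Adj x y ∧ x ∈ s ∧ y ∈ s := by
  simp only [restrict, map_adj, comap_adj, Function.Embedding.subtype_apply]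
  exact ⟨fun ⟨x, y, h, hx, hy⟩ => hx ▸ hy ▸ ⟨h, x.2, y.2⟩, fun ⟨h, hx, hy⟩ =>
    ⟨⟨x, hx⟩, ⟨y, hy⟩, h, rfl, rfl⟩⟩

lemma restrict_le (G : SimpleGraph V) (s : Set V) : restrict G s ≤ G :=
  fun _ _ h => (restrict_adj.1 h).1

lemma deleteBridges_adj {G : SimpleGraph V} {x y : V} :
    (deleteBridges G).Adj x y ↔ G.Adj x y ∧ ¬ G.IsBridge s(x, y) := by
  simp [deleteBridges, deleteEdges_adj]

lemma not_isBridge_map {W : Type*} {G : SimpleGraph V} {H : SimpleGraph W} (f : V → W) {u v : V}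
    (h : ¬ G.IsBridge s(u, v))
    (hf : ∀ x y, G.Adj x y → s(x, y) ≠ s(u, v) →
      f x = f y ∨ (H.Adj (f x) (f y) ∧ s(f x, f y) ≠ s(f u, f v))) :
    ¬ H.IsBridge s(f u, f v) := by
  simp only [isBridge_iff, not_not] at h ⊢
  obtain ⟨w⟩ := h
  suffices ∀ {x y}, (G.deleteEdges {s(u, v)}).Walk x y →
      (H.deleteEdges {s(f u, f v)}).Reachable (f x) (f y) from this w
  intro x y w
  induction w with
  | nil => rfl
  | cons hxy _ ih =>
    rw [deleteEdges_adj] at hxy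
    refine Reachable.trans ?_ ih
    obtain heq | hadj := hf _ _ hxy.1 hxy.2
    · rw [heq]
    · exact (deleteEdges_adj.2 hadj).reachable

lemma not_isBridge_map_of_unique {W : Type*} {G : SimpleGraph V} {H : SimpleGraph W} (f : V → W)
    {u v : V} (h : ¬ G.IsBridge s(u, v))
    (hf : ∀ x y, G.Adj x y → f x = f y ∨ H.Adj (f x) (f y))
    (huniq : ∀ x y, G.Adj x y → f x = f u → f y = f v → s(x, y) = s(u, v)) :
    ¬ H.IsBridge s(f u, f v) := by
  refine not_isBridge_map f h fun x y hxy hne => (hf x y hxy).imp_right fun h =>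
    ⟨h, fun heq => hne ?_⟩
  rcases Sym2.eq_iff.1 heq with ⟨hx, hy⟩ | ⟨hx, hy⟩
  · exact huniq x y hxy hx hy
  · rw [Sym2.eq_swap]
    exact huniq y x hxy.symm hy hx

lemma not_isBridge_of_triangle {G : SimpleGraph V} {u v z : V} (huz : G.Adj u z)
    (hvz : G.Adj v z) (huv : u ≠ v) : ¬ G.IsBridge s(u, v) := by
  have := huz.ne
  have := hvz.ne
  rw [isBridge_iff, not_not]
  refine Reachable.trans (v := z) (Adj.reachable ?_) (Adj.reachable ?_) <;>
    rw [deleteEdges_adj]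
  · exact ⟨huz, by grind⟩
  · exact ⟨hvz.symm, by grind⟩

lemma Bridgeless.exists_isCycleList {G : SimpleGraph V} (hG : Bridgeless G) {a b : V}
    (hab : G.Adj a b) : ∃ c l, IsCycleList G (a :: b :: c :: l) := by
  obtain ⟨p, hp⟩ := (not_not.1 (isBridge_iff.not.1 (hG hab))).symm.exists_isPath
  obtain ⟨l, hl⟩ : ∃ l, p.support = b :: (l ++ [a]) := by
    have hne : p.support.tail ≠ [] := by
      cases p with
      | nil => exact absurd rfl hab.ne
      | cons _ q => exact q.support_ne_nil
    refine ⟨p.support.tail.dropLast, ?_⟩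
    rw [show [a] = [p.support.tail.getLast hne] by simp, List.dropLast_append_getLast,
      p.cons_tail_support]
  have hedges : ∀ e ∈ pathEdges (b :: (l ++ [a])), e ∈ G.edgeSet ∧ e ≠ s(a, b) := fun e he => by
    have := p.edges_subset_edgeSet (pathEdges_support p ▸ hl ▸ he)
    simpa using this
  obtain _ | ⟨c, l⟩ := l
  · simp [Sym2.eq_swap] at hedges
  refine ⟨c, l, ?_, by simp, ?_⟩
  · have := hp.support_nodup
    rw [hl] at this
    exact (List.perm_append_singleton a (b :: c :: l)).nodup_iff.1 this
  · intro e he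
    rcases List.mem_cons.1 he with rfl | he
    exacts [hab, (hedges e he).1]

lemma bridgeless_deleteBridges (G : SimpleGraph V) : Bridgeless (deleteBridges G) := by
  intro u v huv hbridge
  obtain ⟨hadj, hnot⟩ := deleteBridges_adj.1 huv
  simp only [isBridge_iff_forall_cycle_notMem (e := s(u, v)) hadj, not_forall, not_not] at hnot
  obtain ⟨x, p, hp, huvp⟩ := hnot
  have hall : ∀ e ∈ p.edges, e ∈ (deleteBridges G).edgeSet := fun e he => by
    rw [deleteBridges, edgeSet_deleteEdges]
    exact ⟨p.edges_subset_edgeSet he, fun hb => hb.notMem_edges_of_isCycle hp he⟩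
  exact hbridge.notMem_edges_of_isCycle (hp.transfer hall) (by simpa using huvp)

lemma Bridgeless.restrict {G : SimpleGraph V} (hG : Bridgeless G) {s : Set V} {v : V}
    (h : ∀ x y, G.Adj x y → x ∉ s → y ∈ s → y = v) : Bridgeless (restrict G s) := by
  classical
  intro u w huw
  obtain ⟨hadj, hu, hw⟩ := restrict_adj.1 huw
  let f : V → V := fun x => if x ∈ s then x else v
  have := not_isBridge_map (H := CycleCover.restrict G s) f (hG hadj) (fun x y hxy hne => by
    by_cases hx : x ∈ s <;> by_cases hy : y ∈ s
    · exact Or.inr (by simpa [f, hx, hy, hu, hw, hxy, restrict_adj] using hne)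
    · simp [f, hy, h y x hxy.symm hy hx]
    · simp [f, hx, h x y hxy hx hy]
    · simp [f, hx, hy])
  simpa [f, hu, hw] using this

lemma IsCycleCover.append {G H K : SimpleGraph V} {L M : List (List V)} (hL : IsCycleCover G L)
    (hM : IsCycleCover H M) (hG : G ≤ K) (hH : H ≤ K)
    (hK : ∀ x y, K.Adj x y → G.Adj x y ∨ H.Adj x y) : IsCycleCover K (L ++ M) where
  isCycleList c hc := (List.mem_append.1 hc).elim (fun h => (hL.isCycleList c h).mono hG)
    fun h => (hM.isCycleList c h).mono hH
  covers x y h := covers_append.2 ((hK x y h).imp (hL.covers ·) (hM.covers ·))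

section Finite

variable [Finite V] {G H : SimpleGraph V}

lemma ncard_support_lt (hle : H ≤ G) {x y : V} (h : G.Adj x y) (hx : ∀ z, ¬ H.Adj x z) :
    H.support.ncard < G.support.ncard := by
  refine Set.ncard_lt_ncard ⟨support_mono hle, fun hss => ?_⟩ (Set.toFinite _)
  obtain ⟨z, hz⟩ := hss ⟨y, h⟩
  exact hx z hz

lemma two_le_ncard_support {x y : V} (h : G.Adj x y) : 2 ≤ G.support.ncard := by
  rw [← Set.ncard_pair h.ne]
  refine Set.ncard_le_ncard ?_ (Set.toFinite _)
  rintro z (rfl | rfl)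
  exacts [⟨y, h⟩, ⟨x, h.symm⟩]

lemma ncard_support_restrict_compl_add_le {s : Set V} (hs : s ⊆ G.support) :
    (restrict G sᶜ).support.ncard + s.ncard ≤ G.support.ncard := by
  rw [← Set.ncard_sdiff_add_ncard_of_subset hs]
  refine Nat.add_le_add_right (Set.ncard_le_ncard ?_ (Set.toFinite _)) _
  rintro v ⟨w, hvw⟩
  exact ⟨⟨w, (restrict_adj.1 hvw).1⟩, (restrict_adj.1 hvw).2.1⟩

lemma ncard_support_restrict_insert_add_le (G : SimpleGraph V) (s : Set V) (v : V) :
    (restrict G (insert v s)).support.ncard + (restrict G sᶜ).support.ncard ≤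
      G.support.ncard + 1 := by
  rw [← Set.ncard_union_add_ncard_inter _ _ (Set.toFinite _) (Set.toFinite _),
    ← Set.ncard_singleton v]
  refine Nat.add_le_add (Set.ncard_le_ncard (Set.union_subset ?_ ?_) (Set.toFinite _))
    (Set.ncard_le_ncard ?_ (Set.toFinite _))
  · exact support_mono (restrict_le _ _)
  · exact support_mono (restrict_le _ _)
  · rintro z ⟨⟨w, hw⟩, ⟨w', hw'⟩⟩
    exact (restrict_adj.1 hw).2.1.resolve_right (restrict_adj.1 hw').2.1

/-- The bound is inherited from the two sides of a cut vertex `v`, since they share only `v`. -/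
lemma HasSmallCover.of_cutVertex (hG : Bridgeless G)
    (ih : ∀ H : SimpleGraph V, Bridgeless H → H.support.ncard < G.support.ncard → HasSmallCover H)
    {s : Set V} {v : V} (hs : ∀ x y, G.Adj x y → x ∈ s → y ∈ s ∨ y = v)
    (hin : ∃ x y, G.Adj x y ∧ x ∈ s) (hout : ∃ x y, G.Adj x y ∧ x ∉ s ∧ y ∉ s) :
    HasSmallCover G := by
  obtain ⟨x₁, y₁, h₁, hx₁⟩ := hin
  obtain ⟨x₂, y₂, h₂, hx₂, hy₂⟩ := hout
  have hin_adj : ∀ x y, G.Adj x y → x ∈ s → (restrict G (insert v s)).Adj x y := fun x y h hx =>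
    restrict_adj.2 ⟨h, Or.inr hx, (hs x y h hx).symm⟩
  have hout_adj : (restrict G sᶜ).Adj x₂ y₂ := restrict_adj.2 ⟨h₂, hx₂, hy₂⟩
  have hlt₁ : (restrict G (insert v s)).support.ncard < G.support.ncard := by
    obtain ⟨z, w, hzw, hz⟩ : ∃ z w, G.Adj z w ∧ z ∉ insert v s := by
      have := h₂.ne
      by_cases hx : x₂ = v
      · exact ⟨y₂, x₂, h₂.symm, by grind⟩
      · exact ⟨x₂, y₂, h₂, by grind⟩
    exact ncard_support_lt (restrict_le _ _) hzw fun w h => hz (restrict_adj.1 h).2.1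
  have hlt₂ : (restrict G sᶜ).support.ncard < G.support.ncard :=
    ncard_support_lt (restrict_le _ _) h₁ fun z h => (restrict_adj.1 h).2.1 hx₁
  have hsum := ncard_support_restrict_insert_add_le G s v
  obtain ⟨L₁, hL₁, hlen₁⟩ := ih _ (hG.restrict (v := v) fun x y h hx hy =>
    hy.resolve_right fun hy => hx ((hs y x h.symm hy).symm)) hlt₁
  obtain ⟨L₂, hL₂, hlen₂⟩ := ih (restrict G sᶜ) (hG.restrict (v := v) fun x y h hx hy =>
    (hs x y h (not_not.1 hx)).resolve_left hy) hlt₂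
  refine ⟨L₁ ++ L₂, hL₁.append hL₂ (restrict_le _ _) (restrict_le _ _) fun x y h => ?_, ?_⟩
  · by_cases hx : x ∈ s
    · exact Or.inl (hin_adj x y h hx)
    by_cases hy : y ∈ s
    · exact Or.inl (hin_adj y x h.symm hy).symm
    · exact Or.inr (restrict_adj.2 ⟨h, hx, hy⟩)
  · have := two_le_ncard_support (hin_adj x₁ y₁ h₁ hx₁)
    have := two_le_ncard_support hout_adj
    rw [List.length_append]
    omega

end Finite

/-! ### Pulling cycles back along a shift -/

/-- `G'` arises from `G` by moving edges from `a` to its neighbour `b`; edges may also be lost. This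
covers both contracting the edge `ab` into `b` and the Kelmans shift from `a` to `b`. -/
structure IsShift (G G' : SimpleGraph V) (a b : V) : Prop where
  off : ∀ ⦃x y⦄, G'.Adj x y → x ≠ a → x ≠ b → y ≠ a → y ≠ b → G.Adj x y
  left : ∀ ⦃x⦄, G'.Adj a x → x ≠ b → G.Adj a x ∧ G.Adj b x
  right : ∀ ⦃x⦄, G'.Adj b x → x ≠ a → G.Adj a x ∨ G.Adj b x

/-- The edges `es'` arise from the edges `es` by swapping the roles of `a` and `b` at the vertices
of `F`, as far as this is needed to pull covers back: an edge `s(a, z)` with `z ∈ F` may survive. -/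
structure Reroutes (F : Set V) (a b : V) (es es' : List (Sym2 V)) : Prop where
  off : ∀ e ∈ es, a ∉ e → b ∉ e → e ∈ es'
  flip : ∀ z ∈ F, s(b, z) ∈ es → s(a, z) ∈ es'
  left : ∀ z ∉ F, s(a, z) ∈ es → s(a, z) ∈ es'
  right : ∀ z ∉ F, s(b, z) ∈ es → s(b, z) ∈ es'

lemma Reroutes.mono {F : Set V} {a b : V} {es es₁ es₂ : List (Sym2 V)}
    (h : Reroutes F a b es es₁) (hle : es₁ ⊆ es₂) : Reroutes F a b es es₂ where
  off e he ha hb := hle (h.off e he ha hb)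
  flip z hz he := hle (h.flip z hz he)
  left z hz he := hle (h.left z hz he)
  right z hz he := hle (h.right z hz he)

lemma Reroutes.append {F : Set V} {a b : V} {es₁ es₁' es₂ es₂' : List (Sym2 V)}
    (h₁ : Reroutes F a b es₁ es₁') (h₂ : Reroutes F a b es₂ es₂') :
    Reroutes F a b (es₁ ++ es₂) (es₁' ++ es₂') where
  off e he ha hb := List.mem_append.2 ((List.mem_append.1 he).imp (h₁.off e · ha hb)
    (h₂.off e · ha hb))
  flip z hz h := List.mem_append.2 ((List.mem_append.1 h).imp (h₁.flip z hz) (h₂.flip z hz))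
  left z hz h := List.mem_append.2 ((List.mem_append.1 h).imp (h₁.left z hz) (h₂.left z hz))
  right z hz h := List.mem_append.2 ((List.mem_append.1 h).imp (h₁.right z hz) (h₂.right z hz))

lemma Reroutes.perm {F : Set V} {a b : V} {es₁ es₁' es₂ es₂' : List (Sym2 V)}
    (h : Reroutes F a b es₁ es₁') (h₁ : es₁.Perm es₂) (h₂ : es₁'.Perm es₂') :
    Reroutes F a b es₂ es₂' where
  off e he ha hb := h₂.mem_iff.1 (h.off e (h₁.mem_iff.2 he) ha hb)
  flip z hz he := h₂.mem_iff.1 (h.flip z hz (h₁.mem_iff.2 he))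
  left z hz he := h₂.mem_iff.1 (h.left z hz (h₁.mem_iff.2 he))
  right z hz he := h₂.mem_iff.1 (h.right z hz (h₁.mem_iff.2 he))

lemma Reroutes.of_off {F : Set V} {a b : V} {es : List (Sym2 V)}
    (h : ∀ e ∈ es, a ∉ e ∧ b ∉ e) : Reroutes F a b es es :=
  ⟨fun _ he _ _ => he, fun _ _ he => ((h _ he).2 (Sym2.mem_mk_left _ _)).elim, fun _ _ he => he,
    fun _ _ he => he⟩

open Classical in
lemma Reroutes.singleton {F : Set V} {a b z : V} (ha : z ≠ a) (hb : z ≠ b) :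
    Reroutes F a b [s(b, z)] [s(if z ∈ F then a else b, z)] := by
  constructor <;> grind

lemma pathEdges_cons_concat (u v : V) {l : List V} (hl : l ≠ []) :
    pathEdges (u :: (l ++ [v])) =
      s(u, l.head hl) :: (pathEdges l ++ [s(v, l.getLast hl)]) := by
  rw [pathEdges_cons _ (by simp), pathEdges_concat _ hl, List.head_append_of_ne_nil hl,
    Sym2.eq_swap (a := v)]

lemma cycleEdges_cons_append_cons_perm (a b : V) (l₁ l₂ : List V) :
    (cycleEdges (a :: (l₁ ++ b :: l₂.reverse))).Perm
      (pathEdges (a :: (l₁ ++ [b])) ++ pathEdges (a :: (l₂ ++ [b]))) := by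
  have hrev : b :: (l₂.reverse ++ [a]) = (a :: (l₂ ++ [b])).reverse := by simp
  rw [cycleEdges_cons_append_cons, hrev, pathEdges_reverse]
  exact (List.reverse_perm _).append_left _

lemma exists_isRotated_cons {c : List V} {b : V} (hb : b ∈ c) : ∃ t, c ~r b :: t := by
  obtain ⟨l, m, rfl⟩ := List.append_of_mem hb
  exact ⟨m ++ l, List.isRotated_append⟩

section Reroute

variable {G G' : SimpleGraph V} {a b : V} {F : Set V}

/-- A set `F` of vertices at which swapping `a` and `b` turns edges of `G'` into edges of `G`. -/
structure IsFlipSet (G G' : SimpleGraph V) (a b : V) (F : Set V) : Prop where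
  left_notMem : a ∉ F
  right_notMem : b ∉ F
  adj_left : ∀ z ∈ F, G'.Adj b z → G.Adj a z
  adj_right : ∀ z ∉ F, z ≠ a → G'.Adj b z → G.Adj b z

lemma IsShift.pathEdges_subset (h : IsShift G G' a b) {l : List V}
    (hl : ∀ e ∈ pathEdges l, e ∈ G'.edgeSet) (ha : a ∉ l) (hb : b ∉ l) :
    ∀ e ∈ pathEdges l, e ∈ G.edgeSet := fun e he => by
  induction e with | h x y =>
  have hx : x ∈ l := mem_of_mem_pathEdges he (by simp)
  have hy : y ∈ l := mem_of_mem_pathEdges he (by simp)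
  exact h.off (hl _ he) (by grind) (by grind) (by grind) (by grind)

/-- A cycle through `b` but not `a` is rerouted by moving each of its two edges at `b` separately;
if only one of them moves, the edge `ab` closes the gap. -/
lemma exists_reroute_of_notMem (hab : G.Adj a b) (h : IsShift G G' a b)
    (hF : IsFlipSet G G' a b F) {t : List V} (hc : IsCycleList G' (b :: t)) (ha : a ∉ t) :
    ∃ c, IsCycleList G c ∧ Reroutes F a b (cycleEdges (b :: t)) (cycleEdges c) := by
  classical
  obtain ⟨hb, hnodup⟩ := List.nodup_cons.1 hc.nodup
  have hlen : 2 ≤ t.length := Nat.le_of_succ_le_succ hc.three_le_length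
  have ht : t ≠ [] := by rintro rfl; simp at hlen
  have hE := hc.mem_edgeSet
  rw [cycleEdges_cons, pathEdges_cons_concat _ _ ht] at hE ⊢
  have hmid := h.pathEdges_subset (l := t) (fun e he => hE e (by simp [he])) ha hb
  have hoff : ∀ e ∈ pathEdges t, a ∉ e ∧ b ∉ e := fun e he =>
    ⟨fun h => ha (mem_of_mem_pathEdges he h), fun h => hb (mem_of_mem_pathEdges he h)⟩
  let f : V → V := fun z => if z ∈ F then a else b
  have hf : ∀ z, z ∈ t → G'.Adj b z → G.Adj (f z) z := fun z hz hadj => by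
    by_cases hzF : z ∈ F
    · simpa [f, hzF] using hF.adj_left z hzF hadj
    · simpa [f, hzF] using hF.adj_right z hzF (by grind) hadj
  have hhead := List.head_mem ht
  have hlast := List.getLast_mem ht
  have hfhead := hf _ hhead (hE s(b, t.head ht) (by simp))
  have hflast := hf _ hlast (hE s(b, t.getLast ht) (by simp))
  have hne := hab.ne
  have hreroute : Reroutes F a b (s(b, t.head ht) :: (pathEdges t ++ [s(b, t.getLast ht)]))
      (s(f (t.head ht), t.head ht) :: (pathEdges t ++ [s(f (t.getLast ht), t.getLast ht)])) :=
    (Reroutes.singleton (by grind) (by grind)).append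
      ((Reroutes.of_off hoff).append (Reroutes.singleton (by grind) (by grind)))
  by_cases heq : f (t.head ht) = f (t.getLast ht)
  · have hcycle : cycleEdges (f (t.head ht) :: t) =
        s(f (t.head ht), t.head ht) :: (pathEdges t ++ [s(f (t.getLast ht), t.getLast ht)]) := by
      rw [cycleEdges_cons, pathEdges_cons_concat _ _ ht, ← heq]
    refine ⟨f (t.head ht) :: t, ⟨by grind, hc.three_le_length, ?_⟩, ?_⟩ <;> rw [hcycle]
    swap; · exact hreroute
    grind [mem_edgeSet]
  · have hends : s(f (t.getLast ht), f (t.head ht)) = s(a, b) := by grind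
    have hcycle : cycleEdges (f (t.head ht) :: (t ++ [f (t.getLast ht)])) =
        s(f (t.head ht), t.head ht) :: (pathEdges t ++ [s(f (t.getLast ht), t.getLast ht)]) ++
          [s(a, b)] := by
      rw [← hends, cycleEdges_cons, ← List.cons_append, pathEdges_concat _ (List.cons_ne_nil _ _),
        pathEdges_cons_concat _ _ ht, List.getLast_cons (by simp), List.getLast_concat]
    refine ⟨f (t.head ht) :: (t ++ [f (t.getLast ht)]), ⟨by grind, by grind, ?_⟩, ?_⟩ <;>
      rw [hcycle]
    swap; · exact hreroute.mono (List.subset_append_left _ _)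
    grind [mem_edgeSet]

/-- A path from `a` to `b` is rerouted by reversing its interior if its last vertex is to be
swapped. -/
lemma exists_reroute_arm (hab : G.Adj a b) (h : IsShift G G' a b) (hF : IsFlipSet G G' a b F)
    {l : List V} (ha : a ∉ l) (hb : b ∉ l)
    (hE : ∀ e ∈ pathEdges (a :: (l ++ [b])), e ∈ G'.edgeSet)
    (hl : ∀ x y, l.head? = some x → l.getLast? = some y → y ∈ F → x ∈ F) :
    ∃ m, m.Perm l ∧ (∀ e ∈ pathEdges (a :: (m ++ [b])), e ∈ G.edgeSet) ∧
      Reroutes F a b (pathEdges (a :: (l ++ [b]))) (pathEdges (a :: (m ++ [b]))) ∧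
      ∀ x y, l.head? = some x → l.getLast? = some y → y ∈ F →
        s(b, x) ∈ pathEdges (a :: (m ++ [b])) := by
  have := hF.left_notMem
  have := hF.right_notMem
  obtain rfl | hne := eq_or_ne l []
  · refine ⟨[], .nil, by simpa using hab, ⟨by simp, fun z hz h => ?_, by simp, by simp⟩, by simp⟩
    have : z = a := by simpa [hab.ne'] using h
    grind
  have hmid := h.pathEdges_subset (l := l) (fun e he => hE e (by
    rw [pathEdges_cons_concat _ _ hne]; simp [he])) ha hb
  have hoff : ∀ e ∈ pathEdges l, a ∉ e ∧ b ∉ e := fun e he =>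
    ⟨fun h => ha (mem_of_mem_pathEdges he h), fun h => hb (mem_of_mem_pathEdges he h)⟩
  rw [pathEdges_cons_concat _ _ hne] at hE ⊢
  have hhead := List.head_mem hne
  have hlast := List.getLast_mem hne
  have hahead := h.left (hE s(a, l.head hne) (by simp)) (by grind)
  have hblast : G'.Adj b (l.getLast hne) := hE s(b, l.getLast hne) (by simp)
  simp only [List.head?_eq_some_head hne, List.getLast?_eq_some_getLast hne, Option.some.injEq]
    at hl ⊢
  by_cases hlF : l.getLast hne ∈ F
  · have halast := hF.adj_left _ hlF hblast
    refine ⟨l.reverse, l.reverse_perm, ?_⟩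
    rw [pathEdges_cons_concat _ _ (by simpa using hne), pathEdges_reverse, List.head_reverse,
      List.getLast_reverse]
    refine ⟨?_, ⟨?_, ?_, ?_, ?_⟩, ?_⟩ <;> grind [mem_edgeSet]
  · have hblast' := hF.adj_right _ hlF (by grind) hblast
    refine ⟨l, .rfl, ?_⟩
    rw [pathEdges_cons_concat _ _ hne]
    refine ⟨?_, ⟨?_, ?_, ?_, ?_⟩, ?_⟩ <;> grind [mem_edgeSet]

lemma exists_reroute_of_mem (hab : G.Adj a b) (h : IsShift G G' a b) (hF : IsFlipSet G G' a b F)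
    {l₁ l₂ : List V} (hc : IsCycleList G' (a :: (l₁ ++ b :: l₂.reverse)))
    (hl₁ : ∀ x y, l₁.head? = some x → l₁.getLast? = some y → y ∈ F → x ∈ F)
    (hl₂ : ∀ x y, l₂.head? = some x → l₂.getLast? = some y → y ∈ F → x ∈ F) :
    ∃ d, IsCycleList G d ∧
      Reroutes F a b (cycleEdges (a :: (l₁ ++ b :: l₂.reverse))) (cycleEdges d) ∧
      ∀ l ∈ [l₁, l₂], ∀ x y, l.head? = some x → l.getLast? = some y → y ∈ F →
        s(b, x) ∈ cycleEdges d := by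
  have hperm := cycleEdges_cons_append_cons_perm a b
  have hmem := fun e he => hc.mem_edgeSet e ((hperm l₁ l₂).mem_iff.2 (List.mem_append.2 he))
  have hnodup := hc.nodup
  obtain ⟨m₁, hm₁, hE₁, hR₁, hb₁⟩ := exists_reroute_arm hab h hF (l := l₁) (by grind) (by grind)
    (fun e he => hmem e (Or.inl he)) hl₁
  obtain ⟨m₂, hm₂, hE₂, hR₂, hb₂⟩ := exists_reroute_arm hab h hF (l := l₂) (by grind) (by grind)
    (fun e he => hmem e (Or.inr he)) hl₂
  have hm : (a :: (l₁ ++ b :: l₂.reverse)).Perm (a :: (m₁ ++ b :: m₂.reverse)) :=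
    (hm₁.symm.append (((List.reverse_perm _).trans (hm₂.symm.trans
      (List.reverse_perm _).symm)).cons b)).cons a
  refine ⟨a :: (m₁ ++ b :: m₂.reverse), ⟨hm.nodup_iff.1 hnodup, hm.length_eq ▸ hc.three_le_length,
    fun e he => ?_⟩, (hR₁.append hR₂).perm (hperm _ _).symm (hperm _ _).symm, ?_⟩
  · exact (List.mem_append.1 ((hperm _ _).mem_iff.1 he)).elim (hE₁ e) (hE₂ e)
  · simp only [(hperm _ _).mem_iff, List.mem_append]
    grind

lemma IsShift.isCycleList_of_notMem (h : IsShift G G' a b) {c : List V} (hc : IsCycleList G' c)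
    (hb : b ∉ c) : IsCycleList G c := by
  refine ⟨hc.nodup, hc.three_le_length, fun e he => ?_⟩
  induction e with | h x y =>
  have hx : x ∈ c := mem_of_mem_cycleEdges he (by simp)
  have hy : y ∈ c := mem_of_mem_cycleEdges he (by simp)
  have hxy : G'.Adj x y := hc.mem_edgeSet _ he
  rw [mem_edgeSet]
  by_cases hxa : x = a
  · exact hxa ▸ (h.left (hxa ▸ hxy) (by grind)).1
  by_cases hya : y = a
  · exact (hya ▸ (h.left (hya ▸ hxy.symm) (by grind)).1).symm
  · exact h.off hxy hxa (by grind) hya (by grind)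

/-- Each cycle of `G'` through `a` and `b` splits into two paths between them; `R x y` says that `x`
and `y` are the ends of the interior of one of them, with `x` next to `a`. -/
lemma exists_reroute (hab : G.Adj a b) (h : IsShift G G' a b) {c : List V}
    (hc : IsCycleList G' c) :
    ∃ R : V → V → Prop, (∀ x y, R x y → x ≠ b ∧ G'.Adj a x) ∧
      ∀ F, IsFlipSet G G' a b F → (∀ x y, R x y → y ∈ F → x ∈ F) →
        ∃ d, IsCycleList G d ∧ Reroutes F a b (cycleEdges c) (cycleEdges d) ∧
          ∀ x y, R x y → y ∈ F → s(b, x) ∈ cycleEdges d := by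
  by_cases hb : b ∉ c
  · refine ⟨fun _ _ => False, by simp, fun _ _ _ => ⟨c, ?_, ?_, by simp⟩⟩
    · exact h.isCycleList_of_notMem hc hb
    · exact ⟨fun e he _ _ => he, fun z _ he => (hb (mem_of_mem_cycleEdges he (by simp))).elim,
        fun _ _ he => he, fun _ _ he => he⟩
  obtain ⟨t, ht⟩ := exists_isRotated_cons (not_not.1 hb)
  have hct := cycleEdges_perm_of_isRotated ht
  by_cases ha : a ∉ t
  · refine ⟨fun _ _ => False, by simp, fun F hF _ => ?_⟩
    obtain ⟨d, hd, hR⟩ := exists_reroute_of_notMem hab h hF (hc.of_isRotated ht) ha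
    exact ⟨d, hd, hR.perm hct.symm .rfl, by simp⟩
  obtain ⟨l₂, l₁, rfl⟩ := List.append_of_mem (not_not.1 ha)
  have hrot : c ~r a :: (l₁ ++ b :: l₂.reverse.reverse) := ht.trans (by
    simpa using List.isRotated_append (l := b :: l₂) (l' := a :: l₁))
  refine ⟨fun x y => ∃ l ∈ [l₁, l₂.reverse], l.head? = some x ∧ l.getLast? = some y, ?_,
    fun F hF hclosed => ?_⟩
  · rintro x y ⟨l, hl, hx, -⟩
    obtain ⟨m, rfl⟩ := List.head?_eq_some_iff.1 hx
    have hnodup := (hc.of_isRotated hrot).nodup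
    refine ⟨by grind, (hc.of_isRotated hrot).mem_edgeSet s(a, x) ?_⟩
    rw [(cycleEdges_cons_append_cons_perm a b l₁ l₂.reverse).mem_iff]
    rcases List.mem_pair.1 hl with h | h <;> simp [← h]
  · obtain ⟨d, hd, hR, hdR⟩ := exists_reroute_of_mem hab h hF (hc.of_isRotated hrot)
      (fun x y hx hy => hclosed x y ⟨l₁, by simp, hx, hy⟩)
      fun x y hx hy => hclosed x y ⟨l₂.reverse, by simp, hx, hy⟩
    exact ⟨d, hd, hR.perm (cycleEdges_perm_of_isRotated hrot).symm .rfl,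
      fun x y ⟨l, hl, hx, hy⟩ => hdR l hl x y hx hy⟩

/-- The vertices at which `a` and `b` have to be swapped: the neighbours that `a` has on its own,
and whatever is forced by the relations `R i`. -/
inductive Flipped {ι : Type*} (G : SimpleGraph V) (a b : V) (R : ι → V → V → Prop) : V → Prop
  | own {z : V} : G.Adj a z → ¬ G.Adj b z → z ≠ b → Flipped G a b R z
  | step {i : ι} {x y : V} : R i x y → Flipped G a b R y → Flipped G a b R x

lemma IsShift.adj_of_flipped {ι : Type*} (h : IsShift G G' a b) {R : ι → V → V → Prop}
    (hR : ∀ i x y, R i x y → x ≠ b ∧ G'.Adj a x) {z : V} (hz : Flipped G a b R z) :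
    z ≠ b ∧ G.Adj a z := by
  cases hz with
  | own haz _ hzb => exact ⟨hzb, haz⟩
  | step hxy _ => exact ⟨(hR _ _ _ hxy).1, (h.left (hR _ _ _ hxy).2 (hR _ _ _ hxy).1).1⟩

lemma IsShift.isFlipSet {ι : Type*} (h : IsShift G G' a b)
    {R : ι → V → V → Prop}
    (hR : ∀ i x y, R i x y → x ≠ b ∧ G'.Adj a x) :
    IsFlipSet G G' a b {z | Flipped G a b R z} := by
  have hflipped := fun z => h.adj_of_flipped hR (z := z)
  exact ⟨fun ha => (hflipped a ha).2.ne rfl, fun hb => (hflipped b hb).1 rfl,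
    fun z hz _ => (hflipped z hz).2, fun z hz hza hbz => by_contra fun hnot =>
      hz (.own ((h.right hbz hza).resolve_right hnot) hnot hbz.ne')⟩

/-- Swapping `a` and `b` at the flipped vertices turns the cycles of `G'` into cycles of `G`. A
common neighbour of `a` and `b` is flipped only because one of the new cycles uses the edge from it
to `b`. -/
theorem IsShift.exists_pullback (hab : G.Adj a b) (h : IsShift G G' a b) {L : List (List V)}
    (hL : ∀ c ∈ L, IsCycleList G' c) :
    ∃ L' : List (List V), L'.length = L.length ∧ (∀ c ∈ L', IsCycleList G c) ∧
      (∀ e, a ∉ e → b ∉ e → Covers L e → Covers L' e) ∧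
      (∀ z, G.Adj a z → ¬ G.Adj b z → z ≠ b → Covers L s(b, z) → Covers L' s(a, z)) ∧
      (∀ z, ¬ G.Adj a z → Covers L s(b, z) → Covers L' s(b, z)) ∧
      ∀ z, G.Adj b z → Covers L s(a, z) → Covers L s(b, z) →
        Covers L' s(a, z) ∧ Covers L' s(b, z) := by
  choose R hR hroute using fun c : {c // c ∈ L} => exists_reroute hab h (hL c c.2)
  have hF := h.isFlipSet hR
  choose d hd hes hstep using fun c => hroute c _ hF fun _ _ hxy hy => Flipped.step hxy hy
  have hcov : ∀ {e e'}, (∀ c, e ∈ cycleEdges c.1 → e' ∈ cycleEdges (d c)) → Covers L e →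
      Covers (L.attach.map d) e' := fun himp ⟨c, hc, he⟩ =>
    ⟨d ⟨c, hc⟩, List.mem_map_of_mem (L.mem_attach ⟨c, hc⟩), himp ⟨c, hc⟩ he⟩
  refine ⟨L.attach.map d, by simp, fun c hc => ?_,
    fun e ha hb => hcov fun c he => (hes c).off e he ha hb,
    fun z haz hbz hzb => hcov fun c => (hes c).flip z (.own haz hbz hzb),
    fun z haz => hcov fun c => (hes c).right z fun hz => haz (h.adj_of_flipped hR hz).2,
    fun z hbz ha hb => ?_⟩
  · obtain ⟨c, -, rfl⟩ := List.mem_map.1 hc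
    exact hd c
  by_cases hz : Flipped G a b R z
  · refine ⟨hcov (fun c => (hes c).flip z hz) hb, ?_⟩
    cases hz with
    | own _ hnot => exact absurd hbz hnot
    | step hxy hy => exact ⟨_, List.mem_map_of_mem (L.mem_attach _), hstep _ _ _ hxy hy⟩
  · exact ⟨hcov (fun c => (hes c).left z hz) ha, hcov (fun c => (hes c).right z hz) hb⟩

end Reroute

/-! ### Contractions -/

open Classical in
/-- The map of vertices that contracts the edge `ab` into `b`. -/
noncomputable def contract (a b x : V) : V := if x = a then b else x

lemma contract_of_ne {a b x : V} (h : x ≠ a) : contract a b x = x := if_neg h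

lemma contract_self (a b : V) : contract a b a = b := if_pos rfl

lemma contract_ne {a b : V} (hab : a ≠ b) (x : V) : contract a b x ≠ a := by
  grind [contract]

lemma map_contract_adj_right {G : SimpleGraph V} {a b x : V}
    (h : (G.map (contract a b)).Adj b x) : G.Adj a x ∨ G.Adj b x := by
  obtain ⟨hne, u, v, huv, hu, hv⟩ := h
  grind [contract]

lemma map_contract_adj_of_ne {G : SimpleGraph V} {a b x y : V}
    (h : (G.map (contract a b)).Adj x y) (hx : x ≠ b) (hy : y ≠ b) : G.Adj x y := by
  obtain ⟨-, u, v, huv, hu, hv⟩ := h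
  grind [contract]

lemma mem_support_of_map_contract {G : SimpleGraph V} {a b x : V} (hab : G.Adj a b)
    (hx : x ∈ (G.map (contract a b)).support) : x ∈ G.support ∧ x ≠ a := by
  obtain ⟨y, -, u, v, huv, rfl, -⟩ := hx
  refine ⟨?_, contract_ne hab.ne u⟩
  by_cases hu : u = a
  · rw [hu, contract_self]
    exact ⟨a, hab.symm⟩
  · rw [contract_of_ne hu]
    exact ⟨v, huv⟩

lemma isShift_map_contract {G : SimpleGraph V} {a b : V} (hab : G.Adj a b) :
    IsShift G (G.map (contract a b)) a b where
  off _ _ h _ hxb _ hyb := map_contract_adj_of_ne h hxb hyb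
  left _ h _ := absurd rfl (mem_support_of_map_contract hab ⟨_, h⟩).2
  right _ h _ := map_contract_adj_right h

lemma exists_pullback_contract {G : SimpleGraph V} {a b : V} (hab : G.Adj a b)
    (hno : ∀ z, G.Adj a z → ¬ G.Adj b z) {L : List (List V)}
    (hL : ∀ c ∈ L, IsCycleList (G.map (contract a b)) c) :
    ∃ L' : List (List V), L'.length = L.length ∧ (∀ c ∈ L', IsCycleList G c) ∧
      ∀ x y, G.Adj x y → contract a b x ≠ contract a b y →
        Covers L s(contract a b x, contract a b y) → Covers L' s(x, y) := by
  obtain ⟨L', hlen, hL', hoff, hleft, hright, -⟩ :=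
    (isShift_map_contract hab).exists_pullback hab hL
  refine ⟨L', hlen, hL', ?_⟩
  have hself := contract_self a b
  have hof := fun x => contract_of_ne (a := a) (b := b) (x := x)
  have key : ∀ x y, x = a ∨ x = b → G.Adj x y → contract a b x ≠ contract a b y →
      Covers L s(contract a b x, contract a b y) → Covers L' s(x, y) := by
    rintro x y (rfl | rfl) hxy hne hcov
    · rw [hself, hof y hxy.ne'] at hcov
      exact hleft y hxy (hno y hxy) (by grind) hcov
    · rw [hof x hab.ne', hof y (by grind)] at hcov
      exact hright y (fun h => hno y h hxy) hcov
  intro x y hxy hne hcov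
  by_cases hx : x = a ∨ x = b
  · exact key x y hx hxy hne hcov
  by_cases hy : y = a ∨ y = b
  · rw [Sym2.eq_swap] at hcov ⊢
    exact key y x hy hxy.symm hne.symm hcov
  · push Not at hx hy
    rw [hof x hx.1, hof y hy.1] at hcov
    exact hoff _ (by grind) (by grind) hcov

lemma map_map_adj_or {W X : Type*} {G : SimpleGraph V} (f : V → W) (g : W → X) {x y : V}
    (h : G.Adj x y) : g (f x) = g (f y) ∨ ((G.map f).map g).Adj (g (f x)) (g (f y)) := by
  by_cases hne : g (f x) = g (f y)
  · exact Or.inl hne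
  · exact Or.inr (map_adj_apply' (map_adj_apply' h fun h => hne (by rw [h])) hne)

/-- In a triangle-free graph, no two edges become parallel when opposite edges of a four-cycle are
contracted, apart from the edges of the four-cycle itself. -/
lemma edge_unique_of_fourCycle {G : SimpleGraph V}
    (htri : ∀ x y z, G.Adj x y → G.Adj y z → ¬ G.Adj x z) {a b c d : V}
    (hab : G.Adj a b) (hbc : G.Adj b c) (hcd : G.Adj c d) (hda : G.Adj d a)
    {x y x' y' : V} (hxy : G.Adj x y) (hxy' : G.Adj x' y')
    (hxyq : s(x, y) ∉ [s(a, b), s(b, c), s(c, d), s(d, a)])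
    (hx : x' = x ∨ (x' = a ∨ x' = b) ∧ (x = a ∨ x = b) ∨ (x' = c ∨ x' = d) ∧ (x = c ∨ x = d))
    (hy : y' = y ∨ (y' = a ∨ y' = b) ∧ (y = a ∨ y = b) ∨ (y' = c ∨ y' = d) ∧ (y = c ∨ y = d)) :
    s(x', y') = s(x, y) := by
  have := htri a b c hab hbc
  have := htri b c d hbc hcd
  have := hxy.ne
  have := hxy'.ne
  simp only [List.mem_cons, List.not_mem_nil, or_false, not_or] at hxyq
  rcases hx with rfl | hx | hx <;> rcases hy with rfl | hy | hy
  · rfl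
  · have := htri x' y' y
    grind [SimpleGraph.adj_comm]
  · have := htri x' y' y
    grind [SimpleGraph.adj_comm]
  · have := htri y' x' x
    grind [SimpleGraph.adj_comm]
  · grind [SimpleGraph.adj_comm]
  · grind [SimpleGraph.adj_comm]
  · have := htri y' x' x
    grind [SimpleGraph.adj_comm]
  · grind [SimpleGraph.adj_comm]
  · grind [SimpleGraph.adj_comm]

lemma eq_of_adj_of_no_threeCycle_fourCycle {G : SimpleGraph V}
    (htri : ∀ x y z, G.Adj x y → G.Adj y z → ¬ G.Adj x z)
    (hfour : ∀ a b c d, G.Adj a b → G.Adj b c → G.Adj c d → G.Adj d a → a ≠ c → b = d)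
    {a b c : V} (hab : G.Adj a b) (hbc : G.Adj b c) (hca : c ≠ a) {u v v' : V}
    (huv : G.Adj u v) (huv' : G.Adj u v') (huvq : s(u, v) ∉ [s(a, b), s(b, c)])
    (hv : v = a ∨ v = b ∨ v = c) (hv' : v' = a ∨ v' = b ∨ v' = c) : v' = v := by
  simp only [List.mem_cons, List.not_mem_nil, or_false, not_or] at huvq
  by_contra hne
  have hvv' := htri v u v' huv.symm huv'
  have hub : (v = a ∧ v' = c ∨ v = c ∧ v' = a) → u = b := fun h => by
    rcases h with ⟨rfl, rfl⟩ | ⟨rfl, rfl⟩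
    · exact (hfour v b v' u hab hbc huv'.symm huv hca.symm).symm
    · exact (hfour v' b v u hab hbc huv.symm huv' hca.symm).symm
  have := hab.symm
  have := hbc.symm
  grind

lemma not_map_contract_adj_of_fourCycle {G G₀ : SimpleGraph V} (hle : G₀ ≤ G)
    (htri : ∀ x y z, G.Adj x y → G.Adj y z → ¬ G.Adj x z) {a b c d : V} (hbc : G.Adj b c)
    (hcd : G.Adj c d) (had : ¬ G₀.Adj a d) (hbd : b ≠ d) {z : V}
    (hdz : (G₀.map (contract a b)).Adj d z) : ¬ (G₀.map (contract a b)).Adj c z := fun hcz => by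
  by_cases hzb : z = b
  · rcases map_contract_adj_right (hzb ▸ hdz.symm) with h | h
    · exact had h
    · exact htri b c d hbc hcd (hle h)
  · exact htri c d z hcd (hle (map_contract_adj_of_ne hdz hbd.symm hzb))
      (hle (map_contract_adj_of_ne hcz hbc.ne' hzb))

section Finite

variable [Finite V] {G : SimpleGraph V}

lemma ncard_support_add_two_le {H : SimpleGraph V} {a d : V} (had : a ≠ d) (ha : a ∈ G.support)
    (hd : d ∈ G.support) (h : ∀ x ∈ H.support, x ∈ G.support ∧ x ≠ a ∧ x ≠ d) :
    H.support.ncard + 2 ≤ G.support.ncard := by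
  rw [← Set.ncard_pair had, ← Set.ncard_union_eq _ (Set.toFinite _) (Set.toFinite _)]
  · refine Set.ncard_le_ncard ?_ (Set.toFinite _)
    rintro x (hx | rfl | rfl)
    exacts [(h x hx).1, ha, hd]
  · grind

lemma IsCycleList.length_le_ncard_support {c : List V} (hc : IsCycleList G c) :
    c.length ≤ G.support.ncard := by
  classical
  rw [← List.toFinset_card_of_nodup hc.nodup, ← Set.ncard_coe_finset]
  refine Set.ncard_le_ncard (fun x hx => ?_) (Set.toFinite _)
  obtain ⟨t, ht⟩ := exists_isRotated_cons (List.mem_toFinset.1 hx)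
  have hct := hc.of_isRotated ht
  obtain _ | ⟨y, t⟩ := t
  · simpa using hct.three_le_length
  · exact ⟨y, hct.mem_edgeSet s(x, y) (by simp [cycleEdges_cons])⟩

/-- Contract `a` into `b` and then `d` into `c`. Covers of the result, bridges left out, pull back
to `G₀ ≤ G` and are completed by the single cycle `q`; the support has shrunk by two vertices. -/
lemma HasSmallCover.of_contract_contract {G₀ : SimpleGraph V} (hG : Bridgeless G)
    (ih : ∀ H : SimpleGraph V, Bridgeless H → H.support.ncard < G.support.ncard → HasSmallCover H)
    (hle : G₀ ≤ G) {a b c d : V} {G₁ : SimpleGraph V} (hG₁ : G₁ = G₀.map (contract a b))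
    {f : V → V} (hf : ∀ x, f x = contract d c (contract a b x)) (had : a ≠ d) (hab : G₀.Adj a b)
    (hno_ab : ∀ z, G₀.Adj a z → ¬ G₀.Adj b z) (hdc : G₁.Adj d c)
    (hno_dc : ∀ z, G₁.Adj d z → ¬ G₁.Adj c z)
    (hmap : ∀ x y, G.Adj x y → f x = f y ∨ (G₁.map (contract d c)).Adj (f x) (f y))
    {q : List V} (hq : IsCycleList G q)
    (hinj : ∀ x y, G.Adj x y → s(x, y) ∉ cycleEdges q → G₀.Adj x y ∧ f x ≠ f y ∧
      ∀ x' y', G.Adj x' y' → f x' = f x → f y' = f y → s(x', y') = s(x, y)) :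
    HasSmallCover G := by
  obtain rfl : f = fun x => contract d c (contract a b x) := funext hf
  subst hG₁
  set G₁ := G₀.map (contract a b)
  set G₂ := G₁.map (contract d c)
  have hadj : ∀ x y, G.Adj x y → s(x, y) ∉ cycleEdges q → (deleteBridges G₂).Adj
      (contract d c (contract a b x)) (contract d c (contract a b y)) := fun x y hxy hxyq => by
    obtain ⟨-, hne, huniq⟩ := hinj x y hxy hxyq
    exact deleteBridges_adj.2 ⟨(hmap x y hxy).resolve_left hne,
      not_isBridge_map_of_unique (fun x => contract d c (contract a b x)) (hG hxy) hmap huniq⟩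
  have hcard : (deleteBridges G₂).support.ncard + 2 ≤ G.support.ncard := by
    have hd := mem_support_of_map_contract hab ⟨c, hdc⟩
    refine ncard_support_add_two_le had ⟨b, hle hab⟩ (support_mono hle hd.1) fun x hx => ?_
    have hx₁ := mem_support_of_map_contract hdc (support_mono (deleteEdges_le _) hx)
    have hx₀ := mem_support_of_map_contract hab hx₁.1
    exact ⟨support_mono hle hx₀.1, hx₀.2, hx₁.2⟩
  obtain ⟨L₂, hL₂, hlen₂⟩ := ih _ (bridgeless_deleteBridges G₂) (by omega)
  obtain ⟨L₁, hlen₁, hL₁, hcov₁⟩ := exists_pullback_contract hdc hno_dc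
    fun c hc => (hL₂.isCycleList c hc).mono (deleteEdges_le _)
  obtain ⟨L, hlen, hL, hcov⟩ := exists_pullback_contract hab hno_ab hL₁
  refine ⟨q :: L, ⟨List.forall_mem_cons.2 ⟨hq, fun c hc => (hL c hc).mono hle⟩,
    fun x y hxy => covers_cons.2 (or_iff_not_imp_left.2 fun hxyq => ?_)⟩, ?_⟩
  · obtain ⟨hxy₀, hne, -⟩ := hinj x y hxy hxyq
    have hne₀ : contract a b x ≠ contract a b y := fun h => hne (by simp only [h])
    exact hcov x y hxy₀ hne₀ (hcov₁ _ _ (map_adj_apply' hxy₀ hne₀) hne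
      (hL₂.covers (hadj x y hxy hxyq)))
  · have := hq.length_le_ncard_support
    have := hq.three_le_length
    rw [List.length_cons]
    omega

lemma HasSmallCover.of_fourCycle (hG : Bridgeless G)
    (ih : ∀ H : SimpleGraph V, Bridgeless H → H.support.ncard < G.support.ncard → HasSmallCover H)
    (htri : ∀ x y z, G.Adj x y → G.Adj y z → ¬ G.Adj x z) {a b c d : V}
    (hab : G.Adj a b) (hbc : G.Adj b c) (hcd : G.Adj c d) (hda : G.Adj d a)
    (hac : a ≠ c) (hbd : b ≠ d) : HasSmallCover G := by
  have := hab.ne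
  have := hbc.ne
  have := hcd.ne
  have := hda.ne
  have hq : IsCycleList G [a, b, c, d] := ⟨by grind, by simp, by
    simp [cycleEdges_cons, hab, hbc, hcd, hda]⟩
  have hadj₀ : ∀ x y, (G.deleteEdges {s(a, d)}).Adj x y ↔ G.Adj x y ∧ s(x, y) ≠ s(a, d) :=
    fun x y => by simp [deleteEdges_adj]
  let f : V → V := fun x => contract d c (contract a b x)
  have hf : ∀ x y, f x = f y → x = y ∨ (x = a ∨ x = b) ∧ (y = a ∨ y = b) ∨
      (x = c ∨ x = d) ∧ (y = c ∨ y = d) := by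
    grind [contract]
  have hab₀ := (hadj₀ a b).2 ⟨hab, by grind⟩
  have hdc₀ := (hadj₀ d c).2 ⟨hcd.symm, by grind⟩
  have hdc₁ : ((G.deleteEdges {s(a, d)}).map (contract a b)).Adj d c := by
    have := map_adj_apply' (f := contract a b) hdc₀ (by grind [contract])
    rwa [contract_of_ne hda.ne, contract_of_ne hac.symm] at this
  refine of_contract_contract (f := f) hG ih (deleteEdges_le {s(a, d)}) rfl (fun _ => rfl) hda.ne'
    hab₀ (fun z haz hbz => htri a z b ((hadj₀ _ _).1 haz).1 ((hadj₀ _ _).1 hbz).1.symm hab)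
    hdc₁ (fun _ => not_map_contract_adj_of_fourCycle (deleteEdges_le _) htri hbc hcd
      (fun h => ((hadj₀ _ _).1 h).2 rfl) hbd) ?_ hq ?_
  · intro x y hxy
    by_cases had : s(x, y) = s(a, d)
    · have hfa : f a = f b := by grind [contract]
      have hfd : f d = f c := by grind [contract]
      have hbc₂ := map_map_adj_or (contract a b) (contract d c) ((hadj₀ b c).2 ⟨hbc, by grind⟩)
      rcases Sym2.eq_iff.1 had with ⟨rfl, rfl⟩ | ⟨rfl, rfl⟩ <;> rw [hfa, hfd]
      exacts [hbc₂, hbc₂.imp Eq.symm Adj.symm]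
    · exact map_map_adj_or (contract a b) (contract d c) ((hadj₀ x y).2 ⟨hxy, had⟩)
  · intro x y hxy hxyq
    simp only [cycleEdges_cons, List.cons_append, List.nil_append, pathEdges_cons_cons,
      pathEdges_singleton, List.mem_cons, List.not_mem_nil, or_false, not_or] at hxyq
    refine ⟨(hadj₀ x y).2 ⟨hxy, by grind⟩, fun h => ?_, fun x' y' hxy' hx hy => ?_⟩
    · have := hxy.ne
      have := hf _ _ h
      grind
    · exact edge_unique_of_fourCycle htri hab hbc hcd hda hxy hxy' (by simpa using hxyq) (hf _ _ hx)
        (hf _ _ hy)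

lemma HasSmallCover.of_no_threeCycle_fourCycle (hG : Bridgeless G)
    (ih : ∀ H : SimpleGraph V, Bridgeless H → H.support.ncard < G.support.ncard → HasSmallCover H)
    (htri : ∀ x y z, G.Adj x y → G.Adj y z → ¬ G.Adj x z)
    (hfour : ∀ a b c d, G.Adj a b → G.Adj b c → G.Adj c d → G.Adj d a → a ≠ c → b = d)
    {a b : V} (hab : G.Adj a b) : HasSmallCover G := by
  obtain ⟨c, l, hq⟩ := hG.exists_isCycleList hab
  have hbc : G.Adj b c := hq.mem_edgeSet s(b, c) (by simp [cycleEdges_cons])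
  have hca : c ≠ a := by have := hq.nodup; grind
  have hac := htri a b c hab hbc
  have := hab.ne
  have := hbc.ne
  let f : V → V := fun x => contract c b (contract a b x)
  have hf : ∀ x y, f x = f y → x = y ∨ (x = a ∨ x = b ∨ x = c) ∧ (y = a ∨ y = b ∨ y = c) := by
    grind [contract]
  have hcb₁ : (G.map (contract a b)).Adj c b := by
    have := map_adj_apply' (f := contract a b) hbc.symm (by grind [contract])
    rwa [contract_of_ne hca, contract_of_ne hab.ne'] at this
  have hno_cb : ∀ z, (G.map (contract a b)).Adj c z → ¬ (G.map (contract a b)).Adj b z :=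
    fun z hcz hbz => by
    have hcz' := map_contract_adj_of_ne hcz hbc.ne' hbz.ne'
    rcases map_contract_adj_right hbz with h | h
    · exact hbz.ne (hfour a b c z hab hbc hcz' h.symm hca.symm)
    · exact htri b c z hbc hcz' h
  refine of_contract_contract (f := f) hG ih le_rfl rfl (fun _ => rfl) hca.symm
    hab (fun z haz hbz => htri a z b haz hbz.symm hab) hcb₁ hno_cb
    (fun x y => map_map_adj_or (contract a b) (contract c b)) hq ?_
  intro x y hxy hxyq
  simp only [cycleEdges_cons, List.cons_append, pathEdges_cons_cons, List.mem_cons, not_or] at hxyq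
  have hne : f x ≠ f y := fun h => by
    have := hxy.ne
    have := hf _ _ h
    grind [SimpleGraph.adj_comm]
  refine ⟨hxy, hne, fun x' y' hxy' hx hy => ?_⟩
  have hparallel : ∀ u v v', G.Adj u v → G.Adj u v' → s(u, v) ∉ [s(a, b), s(b, c)] →
      (v = a ∨ v = b ∨ v = c) → (v' = a ∨ v' = b ∨ v' = c) → v' = v := fun _ _ _ =>
    eq_of_adj_of_no_threeCycle_fourCycle htri hfour hab hbc hca
  rcases hf _ _ hx with rfl | hx <;> rcases hf _ _ hy with rfl | hy
  · rfl
  · rw [hparallel x' y y' hxy hxy' (by simp_all) hy.2 hy.1]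
  · rw [hparallel y' x x' hxy.symm hxy'.symm (by simp_all [Sym2.eq_swap]) hx.2 hx.1]
  · have hfb : ∀ v, v = a ∨ v = b ∨ v = c → f v = f b := by grind [contract]
    exact absurd ((hfb x hx.2).trans (hfb y hy.2).symm) hne

end Finite

/-! ### Kelmans shifts -/

/-- The Kelmans shift of `G` from `a` to its neighbour `b`: each neighbour of `a` other than `b`
that is not adjacent to `b` becomes adjacent to `b` instead of `a`. -/
def kelmansShift (G : SimpleGraph V) (a b : V) : SimpleGraph V :=
  fromRel fun x y => (G.Adj x y ∧ x ≠ a ∧ y ≠ a) ∨ (x = b ∧ G.Adj a y) ∨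
    (x = a ∧ G.Adj a y ∧ (y = b ∨ G.Adj b y))

section KelmansShift

variable {G : SimpleGraph V} {a b : V}

lemma kelmansShift_adj_off {x y : V} (hxa : x ≠ a) (hxb : x ≠ b) (hya : y ≠ a) (hyb : y ≠ b) :
    (kelmansShift G a b).Adj x y ↔ G.Adj x y := by
  have : G.Adj x y → x ≠ y := Adj.ne
  grind [kelmansShift, fromRel_adj, SimpleGraph.adj_comm]

lemma kelmansShift_adj_left (hab : a ≠ b) {y : V} (hyb : y ≠ b) :
    (kelmansShift G a b).Adj a y ↔ G.Adj a y ∧ G.Adj b y := by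
  have : G.Adj a y → a ≠ y := Adj.ne
  grind [kelmansShift, fromRel_adj]

lemma kelmansShift_adj_right (hab : a ≠ b) {y : V} (hya : y ≠ a) (hyb : y ≠ b) :
    (kelmansShift G a b).Adj b y ↔ G.Adj a y ∨ G.Adj b y := by
  grind [kelmansShift, fromRel_adj, SimpleGraph.adj_comm]

lemma kelmansShift_adj_self (hab : G.Adj a b) : (kelmansShift G a b).Adj a b := by
  have := hab.ne
  grind [kelmansShift, fromRel_adj]

lemma isShift_kelmansShift (hab : a ≠ b) : IsShift G (kelmansShift G a b) a b where
  off _ _ h hxa hxb hya hyb := (kelmansShift_adj_off hxa hxb hya hyb).1 h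
  left _ h hyb := (kelmansShift_adj_left hab hyb).1 h
  right _ h hya := (kelmansShift_adj_right hab hya h.ne').1 h

lemma kelmansShift_adj_contract (hab : G.Adj a b) {x y : V} (h : G.Adj x y) :
    contract a b x = contract a b y ∨
      (kelmansShift G a b).Adj (contract a b x) (contract a b y) := by
  have := hab.ne
  have := h.ne
  grind [kelmansShift, fromRel_adj, contract, SimpleGraph.adj_comm]

lemma not_isBridge_kelmansShift_contract (hG : Bridgeless G) (hab : G.Adj a b) {u v : V}
    (huv : G.Adj u v) (hcommon : u = a ∨ u = b → ¬ (G.Adj a v ∧ G.Adj b v)) (hv : v ≠ a ∧ v ≠ b) :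
    ¬ (kelmansShift G a b).IsBridge s(contract a b u, contract a b v) := by
  refine not_isBridge_map _ (hG huv) fun x y hxy hne => ?_
  refine (kelmansShift_adj_contract hab hxy).imp id fun h => ⟨h, fun heq => ?_⟩
  have := hxy.symm
  rw [Sym2.eq_iff] at heq
  rw [Ne, Sym2.eq_iff] at hne
  grind [contract]

lemma Bridgeless.kelmansShift (hG : Bridgeless G) (hab : G.Adj a b) {z : V} (haz : G.Adj a z)
    (hbz : G.Adj b z) : Bridgeless (kelmansShift G a b) := by
  have htriangle : ∀ y, G.Adj a y → G.Adj b y →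
      (CycleCover.kelmansShift G a b).Adj a y ∧ (CycleCover.kelmansShift G a b).Adj b y :=
    fun y hay hby => ⟨(kelmansShift_adj_left hab.ne hby.ne').2 ⟨hay, hby⟩,
      (kelmansShift_adj_right hab.ne hay.ne' hby.ne').2 (Or.inl hay)⟩
  have hab' := kelmansShift_adj_self hab
  have hleft : ∀ y, (CycleCover.kelmansShift G a b).Adj a y →
      ¬ (CycleCover.kelmansShift G a b).IsBridge s(a, y) := fun y hay => by
    by_cases hyb : y = b
    · rw [hyb]
      exact not_isBridge_of_triangle (htriangle z haz hbz).1 (htriangle z haz hbz).2 hab.ne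
    · have := htriangle y ((kelmansShift_adj_left hab.ne hyb).1 hay).1
        ((kelmansShift_adj_left hab.ne hyb).1 hay).2
      exact not_isBridge_of_triangle hab' this.2.symm hay.ne
  have hright : ∀ y, y ≠ a → (CycleCover.kelmansShift G a b).Adj b y →
      ¬ (CycleCover.kelmansShift G a b).IsBridge s(b, y) := fun y hya hby => by
    by_cases hcommon : G.Adj a y ∧ G.Adj b y
    · exact not_isBridge_of_triangle hab'.symm (htriangle y hcommon.1 hcommon.2).1.symm hby.ne
    · have hcb := contract_of_ne hab.ne' (b := b)
      have hcy := contract_of_ne hya (b := b)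
      rcases (kelmansShift_adj_right hab.ne hya hby.ne').1 hby with h | h
      · have := not_isBridge_kelmansShift_contract hG hab h (fun _ => hcommon) ⟨hya, hby.ne'⟩
        rwa [contract_self, hcy] at this
      · have := not_isBridge_kelmansShift_contract hG hab h (fun _ => hcommon) ⟨hya, hby.ne'⟩
        rwa [hcb, hcy] at this
  intro x y hxy
  by_cases hxa : x = a
  · exact hxa ▸ hleft y (hxa ▸ hxy)
  by_cases hya : y = a
  · exact Sym2.eq_swap ▸ hya ▸ hleft x (hya ▸ hxy.symm)
  by_cases hxb : x = b
  · exact hxb ▸ hright y hya (hxb ▸ hxy)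
  by_cases hyb : y = b
  · exact Sym2.eq_swap ▸ hyb ▸ hright x hxa (hyb ▸ hxy.symm)
  have := not_isBridge_kelmansShift_contract hG hab
    ((kelmansShift_adj_off hxa hxb hya hyb).1 hxy) (by simp [hxa, hxb]) ⟨hya, hyb⟩
  rwa [contract_of_ne hxa, contract_of_ne hya] at this

lemma support_kelmansShift_subset (hab : G.Adj a b) :
    (kelmansShift G a b).support ⊆ G.support := by
  rintro x ⟨y, hxy : (kelmansShift G a b).Adj x y⟩
  by_cases hx : x = a ∨ x = b
  · rcases hx with rfl | rfl
    exacts [⟨b, hab⟩, ⟨a, hab.symm⟩]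
  · have hx' := not_or.1 hx
    obtain ⟨z, hz⟩ : ∃ z, G.Adj z x := by
      have hyx := hxy.symm
      by_cases hya : y = a
      · rw [hya] at hyx
        exact ⟨a, ((kelmansShift_adj_left hab.ne hx'.2).1 hyx).1⟩
      by_cases hyb : y = b
      · rw [hyb] at hyx
        exact ((kelmansShift_adj_right hab.ne hx'.1 hx'.2).1 hyx).elim (⟨a, ·⟩) (⟨b, ·⟩)
      · exact ⟨y, (kelmansShift_adj_off hya hyb hx'.1 hx'.2).1 hyx⟩
    exact ⟨z, hz.symm⟩

lemma IsCycleCover.of_kelmansShift (hab : G.Adj a b) {L : List (List V)}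
    (hL : IsCycleCover (kelmansShift G a b) L) :
    ∃ L', L'.length = L.length ∧ IsCycleCover G L' := by
  obtain ⟨L', hlen, hL', hoff, hleft, hright, hboth⟩ :=
    (isShift_kelmansShift hab.ne).exists_pullback hab hL.isCycleList
  refine ⟨L', hlen, hL', ?_⟩
  have hcb : ∀ y, y ≠ a → y ≠ b → G.Adj a y ∨ G.Adj b y → Covers L s(b, y) :=
    fun y hya hyb h => hL.covers ((kelmansShift_adj_right hab.ne hya hyb).2 h)
  have hcommon : ∀ y, G.Adj a y → G.Adj b y → Covers L' s(a, y) ∧ Covers L' s(b, y) :=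
    fun y hay hby => hboth y hby
      (hL.covers ((kelmansShift_adj_left hab.ne hby.ne').2 ⟨hay, hby⟩))
      (hcb y hay.ne' hby.ne' (Or.inl hay))
  have hbb : Covers L' s(b, a) :=
    hright a G.irrefl (Sym2.eq_swap ▸ hL.covers (kelmansShift_adj_self hab))
  have key : ∀ x y, x = a ∨ x = b → G.Adj x y → Covers L' s(x, y) := by
    rintro x y (rfl | rfl) hxy
    · by_cases hyb : y = b
      · rw [hyb, Sym2.eq_swap]
        exact hbb
      by_cases hby : G.Adj b y
      · exact (hcommon y hxy hby).1
      · exact hleft y hxy hby hyb (hcb y hxy.ne' hyb (Or.inl hxy))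
    · by_cases hya : y = a
      · exact hya ▸ hbb
      by_cases hay : G.Adj a y
      · exact (hcommon y hay hxy).2
      · exact hright y hay (hcb y hya hxy.ne' (Or.inr hxy))
  intro x y hxy
  by_cases hx : x = a ∨ x = b
  · exact key x y hx hxy
  by_cases hy : y = a ∨ y = b
  · exact Sym2.eq_swap ▸ key y x hy hxy.symm
  · rw [not_or] at hx hy
    exact hoff _ (by grind) (by grind)
      (hL.covers ((kelmansShift_adj_off hx.1 hx.2 hy.1 hy.2).2 hxy))

lemma HasSmallCover.of_kelmansShift [Finite V] (hab : G.Adj a b)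
    (h : HasSmallCover (kelmansShift G a b)) : HasSmallCover G := by
  obtain ⟨L, hL, hlen⟩ := h
  obtain ⟨L', hlen', hL'⟩ := hL.of_kelmansShift hab
  have := Set.ncard_le_ncard (support_kelmansShift_subset hab) (Set.toFinite _)
  exact ⟨L', hL', by omega⟩

/-- The neighbours of `a` that the Kelmans shift from `a` to `b` moves to `b`. -/
def privateNeighbors (G : SimpleGraph V) (a b : V) : Set V := {y | G.Adj a y ∧ y ≠ b ∧ ¬ G.Adj b y}

lemma neighborSet_kelmansShift_left (hab : G.Adj a b) :
    (kelmansShift G a b).neighborSet a = G.neighborSet a \ privateNeighbors G a b := by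
  ext y
  by_cases hyb : y = b
  · simp [hyb, hab, kelmansShift_adj_self hab, privateNeighbors]
  · simp only [mem_neighborSet, kelmansShift_adj_left hab.ne hyb, privateNeighbors,
      Set.mem_sdiff, Set.mem_ofPred_eq]
    tauto

lemma neighborSet_kelmansShift_right (hab : G.Adj a b) :
    (kelmansShift G a b).neighborSet b = G.neighborSet b ∪ privateNeighbors G a b := by
  ext y
  by_cases hya : y = a
  · simp [hya, hab.symm, (kelmansShift_adj_self hab).symm]
  by_cases hyb : y = b
  · simp [hyb, privateNeighbors]
  · simp only [mem_neighborSet, kelmansShift_adj_right hab.ne hya hyb, privateNeighbors,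
      Set.mem_union, Set.mem_ofPred_eq]
    tauto

lemma ncard_neighborSet_kelmansShift (hab : G.Adj a b) {x : V} (hxa : x ≠ a) (hxb : x ≠ b) :
    ((kelmansShift G a b).neighborSet x).ncard = (G.neighborSet x).ncard := by
  classical
  by_cases hx : G.Adj a x ∧ ¬ G.Adj b x
  · rw [← Set.ncard_image_of_injective (G.neighborSet x) (Equiv.swap a b).injective]
    congr 1
    ext y
    have := hab.ne
    rw [Equiv.image_eq_preimage_symm]
    have : (kelmansShift G a b).Adj x y ↔ G.Adj x (Equiv.swap a b y) := by
      by_cases hya : y = a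
      · grind [kelmansShift_adj_left, Equiv.swap_apply_left, SimpleGraph.adj_comm]
      by_cases hyb : y = b
      · grind [kelmansShift_adj_right, Equiv.swap_apply_right, SimpleGraph.adj_comm]
      · rw [kelmansShift_adj_off hxa hxb hya hyb, Equiv.swap_apply_of_ne_of_ne hya hyb]
    simpa using this
  · congr 1
    ext y
    have := hab.ne
    have : (kelmansShift G a b).Adj x y ↔ G.Adj x y := by
      by_cases hya : y = a
      · grind [kelmansShift_adj_left, SimpleGraph.adj_comm]
      by_cases hyb : y = b
      · grind [kelmansShift_adj_right, SimpleGraph.adj_comm]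
      · exact kelmansShift_adj_off hxa hxb hya hyb
    simpa using this

/-- The degree sum of `G` with weights `ρ`, a potential that increases under Kelmans shifts towards
vertices of larger weight. -/
noncomputable def weightedDegreeSum [Fintype V] (ρ : V → ℕ) (G : SimpleGraph V) : ℕ :=
  ∑ v, ρ v * (G.neighborSet v).ncard

lemma weightedDegreeSum_lt_kelmansShift [Fintype V] {ρ : V → ℕ} (hab : G.Adj a b) (hρ : ρ a < ρ b)
    {x : V} (hax : G.Adj a x) (hxb : x ≠ b) (hbx : ¬ G.Adj b x) :
    weightedDegreeSum ρ G < weightedDegreeSum ρ (kelmansShift G a b) := by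
  classical
  set P := privateNeighbors G a b
  have hPpos : 0 < P.ncard := (Set.ncard_pos (Set.toFinite _)).2 ⟨x, hax, hxb, hbx⟩
  have hdeg : ∀ v, ((kelmansShift G a b).neighborSet v).ncard + (if v = a then P.ncard else 0)
      = (G.neighborSet v).ncard + if v = b then P.ncard else 0 := fun v => by
    by_cases hva : v = a
    · subst hva
      rw [if_pos rfl, if_neg hab.ne, neighborSet_kelmansShift_left hab, add_zero]
      exact Set.ncard_sdiff_add_ncard_of_subset (fun y hy => hy.1) (Set.toFinite _)
    by_cases hvb : v = b
    · subst hvb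
      rw [if_pos rfl, if_neg hva, neighborSet_kelmansShift_right hab, add_zero]
      exact Set.ncard_union_eq (Set.disjoint_left.2 fun y hy hyP => hyP.2.2 hy)
    · rw [if_neg hva, if_neg hvb, ncard_neighborSet_kelmansShift hab hva hvb]
  have hsum := Finset.sum_congr (rfl : (Finset.univ : Finset V) = _)
    fun v _ => congrArg (ρ v * ·) (hdeg v)
  simp only [mul_add, mul_ite, mul_zero, Finset.sum_add_distrib, Finset.sum_ite_eq',
    Finset.mem_univ, if_true] at hsum
  have := Nat.mul_lt_mul_of_pos_right hρ hPpos
  unfold weightedDegreeSum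
  omega

end KelmansShift

/-! ### Path decompositions with prescribed ends -/

/-- The two ends of a path; a path with a single vertex has it as both of its ends. -/
def pathEnds : List V → Multiset V
  | [] => 0
  | a :: l => {a} + {(a :: l).getLast (List.cons_ne_nil a l)}

/-- The paths in `P`, given by their vertices, use up exactly the edges `F`, and their ends are
exactly the members of `E`, with multiplicity. -/
structure IsPathDecomposition (P : Multiset (List V)) (F : Multiset (Sym2 V)) (E : Multiset V) :
    Prop where
  ne_nil : ∀ p ∈ P, p ≠ []
  nodup : ∀ p ∈ P, p.Nodup
  edges : (P.bind fun p => (pathEdges p : Multiset (Sym2 V))) = F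
  ends : P.bind pathEnds = E

lemma pathEnds_append {p q : List V} (hp : p ≠ []) (hq : q ≠ []) :
    pathEnds (p ++ q) = {p.head hp} + {q.getLast hq} := by
  cases p with
  | nil => exact absurd rfl hp
  | cons a p =>
    simp only [List.cons_append, pathEnds, List.head_cons, Multiset.singleton_add]
    rw [← List.getLast_append_of_ne_nil (l := a :: p) (by simp) hq]
    rfl

lemma pathEnds_eq {p : List V} (hp : p ≠ []) : pathEnds p = {p.head hp} + {p.getLast hp} := by
  cases p with
  | nil => exact absurd rfl hp
  | cons a p => rfl

lemma pathEnds_reverse (p : List V) : pathEnds p.reverse = pathEnds p := by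
  by_cases hp : p = []
  · rw [hp, List.reverse_nil]
  · rw [pathEnds_eq hp, pathEnds_eq (List.reverse_ne_nil_iff.2 hp), add_comm]
    simp

namespace IsPathDecomposition

variable {P : Multiset (List V)} {F : Multiset (Sym2 V)} {E : Multiset V} {p : List V}

lemma replace {Q : Multiset (List V)} {F' : Multiset (Sym2 V)} {E' : Multiset V} {p' : List V}
    (h : IsPathDecomposition (p ::ₘ Q) F E) (hp' : p' ≠ []) (hnodup : p'.Nodup)
    (hF : pathEdges p + F' = pathEdges p' + F) (hE : pathEnds p + E' = pathEnds p' + E) :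
    IsPathDecomposition (p' ::ₘ Q) F' E' where
  ne_nil := Multiset.forall_mem_cons.2 ⟨hp', fun q hq => h.ne_nil q (Multiset.mem_cons_of_mem hq)⟩
  nodup := Multiset.forall_mem_cons.2 ⟨hnodup, fun q hq => h.nodup q (Multiset.mem_cons_of_mem hq)⟩
  edges := by
    rw [← h.edges, Multiset.cons_bind, add_left_comm] at hF
    rw [Multiset.cons_bind, add_left_cancel hF]
  ends := by
    rw [← h.ends, Multiset.cons_bind, add_left_comm] at hE
    rw [Multiset.cons_bind, add_left_cancel hE]

lemma exists_cons (h : IsPathDecomposition P F E) (hp : p ∈ P ∨ p.reverse ∈ P) :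
    ∃ Q, IsPathDecomposition (p ::ₘ Q) F E ∧
      ∀ r, r ∈ P ∨ r.reverse ∈ P → r = p ∨ r = p.reverse ∨ r ∈ Q ∨ r.reverse ∈ Q := by
  rcases hp with hp | hp
  · obtain ⟨Q, rfl⟩ := Multiset.exists_cons_of_mem hp
    refine ⟨Q, h, fun r => ?_⟩
    simp only [Multiset.mem_cons, List.reverse_eq_iff]
    tauto
  · obtain ⟨Q, rfl⟩ := Multiset.exists_cons_of_mem hp
    refine ⟨Q, h.replace (by simpa using h.ne_nil _ hp) (by simpa using h.nodup _ hp) ?_ ?_,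
      fun r => ?_⟩
    · rw [pathEdges_reverse, Multiset.coe_reverse]
    · rw [pathEnds_reverse]
    · simp only [Multiset.mem_cons, List.reverse_inj]
      tauto

lemma mem_of_mem_pathEdges (h : IsPathDecomposition P F E) (hp : p ∈ P) {e : Sym2 V}
    (he : e ∈ pathEdges p) : e ∈ F :=
  h.edges ▸ Multiset.mem_bind.2 ⟨p, hp, he⟩

lemma mem_of_mem_pathEnds (h : IsPathDecomposition P F E) (hp : p ∈ P) {v : V}
    (hv : v ∈ pathEnds p) : v ∈ E :=
  h.ends ▸ Multiset.mem_bind.2 ⟨p, hp, hv⟩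

lemma exists_head_eq (h : IsPathDecomposition P F E) {v : V} (hv : v ∈ E) :
    ∃ p, (p ∈ P ∨ p.reverse ∈ P) ∧ p.head? = some v := by
  rw [← h.ends, Multiset.mem_bind] at hv
  obtain ⟨p, hp, hv⟩ := hv
  rw [pathEnds_eq (h.ne_nil p hp)] at hv
  rcases Multiset.mem_add.1 hv with hv | hv <;> rw [Multiset.mem_singleton] at hv
  · exact ⟨p, Or.inl hp, hv ▸ List.head?_eq_some_head _⟩
  · refine ⟨p.reverse, Or.inr (by rwa [List.reverse_reverse]), ?_⟩
    rw [List.head?_reverse, hv, List.getLast?_eq_some_getLast]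

end IsPathDecomposition

lemma infix_pair_iff_mem_getLast? {q r : List V} {b l : V} (h : (q ++ b :: r).Nodup) :
    [l, b] <:+: q ++ b :: r ↔ l ∈ q.getLast? := by
  have hb : b ∉ q ∧ b ∉ r := by grind
  rw [Option.mem_def, List.getLast?_eq_some_iff]
  constructor
  · rintro ⟨s, t, hst⟩
    rw [show s ++ [l, b] ++ t = (s ++ [l]) ++ b :: t by simp] at hst
    exact ⟨s, ((List.append_cons_inj_of_notMem hb.1 hb.2).1 hst.symm).1⟩
  · rintro ⟨s, rfl⟩
    exact ⟨s, r, by simp⟩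

lemma mem_pathEdges_of_infix_pair {p : List V} {l b : V} (h : [l, b] <:+: p) :
    s(l, b) ∈ pathEdges p := by
  obtain ⟨s, t, rfl⟩ := h
  rw [List.append_assoc, List.cons_append, pathEdges_append_cons]
  simp

lemma coe_pathEdges_append_cons {q : List V} (hq : q ≠ []) (b : V) (r : List V) :
    (pathEdges (q ++ b :: r) : Multiset (Sym2 V)) =
      s(q.getLast hq, b) ::ₘ (pathEdges q + pathEdges (b :: r)) := by
  rw [pathEdges_append_cons, pathEdges_concat b hq, Multiset.coe_add, Multiset.cons_coe,
    Multiset.coe_eq_coe]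
  simp [List.perm_middle]

/-- Up to its direction, `p` is one of the paths in `P`. It starts at `v` and enters `b`, if at all,
from a vertex of `J`. -/
structure IsRoute (P : Multiset (List V)) (b : V) (J : Finset V) (v : V) (p : List V) : Prop where
  mem : p ∈ P ∨ p.reverse ∈ P
  head : p.head? = some v
  enters : ∀ l, [l, b] <:+: p → l ∈ J

section AddEdge

variable [DecidableEq V] {P : Multiset (List V)} {F : Multiset (Sym2 V)} {E : Multiset V} {b x : V}
  {J : Finset V}

lemma IsRoute.exists_of_reverse {Q : Multiset (List V)} {q r p : List V} {l v : V}
    (h : IsRoute P b J v p) (hnodup : (q ++ b :: r).Nodup) (hl : l ∈ q.getLast?)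
    (hQ : ∀ p ∈ Q, s(b, l) ∉ pathEdges p)
    (hp : p = (q ++ b :: r).reverse ∨ p ∈ Q ∨ p.reverse ∈ Q) :
    ∃ p', IsRoute ((q.reverse ++ b :: r) ::ₘ Q) b (J.erase l) v p' := by
  obtain ⟨-, hpv, hpJ⟩ := h
  rcases hp with rfl | hpQ
  · rw [List.reverse_append, List.reverse_cons, List.append_assoc, List.singleton_append] at hpv hpJ
    have hnodup₁ : (r.reverse ++ b :: q.reverse).Nodup := by
      simpa using List.nodup_reverse.2 hnodup
    have hnodup₂ : (r.reverse ++ b :: q).Nodup := by grind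
    refine ⟨r.reverse ++ b :: q, Or.inr (by simp), ?_, fun l' hl' => ?_⟩
    · simpa [List.head?_append] using hpv
    · have hl'' := (infix_pair_iff_mem_getLast? hnodup₂).1 hl'
      refine Finset.mem_erase.2 ⟨?_, hpJ l' ((infix_pair_iff_mem_getLast? hnodup₁).2 hl'')⟩
      rintro rfl
      have := List.mem_of_getLast? hl''
      have := List.mem_of_getLast? hl
      grind
  · refine ⟨p, hpQ.imp Multiset.mem_cons_of_mem Multiset.mem_cons_of_mem, hpv, fun l' hl' => ?_⟩
    refine Finset.mem_erase.2 ⟨?_, hpJ l' hl'⟩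
    rintro rfl
    have := mem_pathEdges_of_infix_pair hl'
    rw [Sym2.eq_swap] at this
    rcases hpQ with hpQ | hpQ
    · exact hQ _ hpQ this
    · exact hQ _ hpQ (by rwa [pathEdges_reverse, List.mem_reverse])

/-- If the path from `x` enters `b` from `l`, reverse its part before `b`: this exchanges the edge
`bl` for `bx` and the end `x` for `l`, and it remains to add the edge `bl`. -/
lemma IsPathDecomposition.reroute {q r : List V} {l : V} (hq : q.head? = some x)
    (hl : l ∈ q.getLast?) (h : IsPathDecomposition P F (E + {x}))
    (hF : (s(b, x) ::ₘ F).Nodup) (hp : q ++ b :: r ∈ P ∨ (q ++ b :: r).reverse ∈ P)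
    (hJ : ∀ v ∈ J, ∃ p, IsRoute P b J v p) (hxJ : x ∉ J) :
    ∃ P' F', IsPathDecomposition P' F' (E + {l}) ∧ s(b, l) ::ₘ F' = s(b, x) ::ₘ F ∧
      ∀ v ∈ J, ∃ p, IsRoute P' b (J.erase l) v p := by
  obtain ⟨Q, hQ, hmem⟩ := h.exists_cons hp
  have hnodup := hQ.nodup _ (Multiset.mem_cons_self _ _)
  have hne : q ≠ [] := by rintro rfl; simp at hq
  have hperm : (q.reverse ++ b :: r).Perm (q ++ b :: r) := q.reverse_perm.append_right _
  have hhead : q.head hne = x := by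
    rwa [List.head?_eq_some_head hne, Option.some_inj] at hq
  have hlast : q.getLast hne = l := by
    rwa [List.getLast?_eq_some_getLast hne, Option.mem_some_iff] at hl
  have hedges := coe_pathEdges_append_cons hne b r
  have hedges' := coe_pathEdges_append_cons (List.reverse_ne_nil_iff.2 hne) b r
  rw [hlast, Sym2.eq_swap] at hedges
  rw [List.getLast_reverse, hhead, Sym2.eq_swap, pathEdges_reverse, Multiset.coe_reverse] at hedges'
  have hbl : s(b, l) ∈ F := hQ.mem_of_mem_pathEdges (Multiset.mem_cons_self _ _)
    (Multiset.mem_coe.1 (hedges ▸ Multiset.mem_cons_self _ _))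
  obtain ⟨F', rfl⟩ := Multiset.exists_cons_of_mem hbl
  have hQl : ∀ p ∈ Q, s(b, l) ∉ pathEdges p := fun p hp hmem => by
    have := hQ.edges
    rw [Multiset.cons_bind, hedges, Multiset.cons_add, Multiset.cons_inj_right] at this
    have hlF' : s(b, l) ∈ F' := by
      rw [← this]
      exact Multiset.mem_add.2 (Or.inr (Multiset.mem_bind.2 ⟨p, hp, hmem⟩))
    exact (Multiset.nodup_cons.1 (Multiset.nodup_cons.1 hF).2).1 hlF'
  refine ⟨(q.reverse ++ b :: r) ::ₘ Q, s(b, x) ::ₘ F',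
    hQ.replace (by simp) (hperm.nodup_iff.2 hnodup) ?_ ?_, Multiset.cons_swap _ _ _, fun v hv => ?_⟩
  · rw [hedges, hedges']
    simp only [Multiset.cons_add, Multiset.add_cons, Multiset.cons_swap]
  · rw [pathEnds_append hne (List.cons_ne_nil b r),
      pathEnds_append (List.reverse_ne_nil_iff.2 hne) (List.cons_ne_nil b r)]
    rw [List.head_reverse, hhead, hlast]
    abel
  · obtain ⟨p, hp⟩ := hJ v hv
    refine hp.exists_of_reverse hnodup hl hQl ((hmem p hp.mem).resolve_left ?_)
    rintro rfl
    have hvx := hp.head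
    rw [List.head?_append, hq, Option.some_or, Option.some_inj] at hvx
    exact hxJ (hvx ▸ hv)

lemma IsPathDecomposition.exists_of_isRoute (h : IsPathDecomposition P F (E + {x}))
    (hF : (s(b, x) ::ₘ F).Nodup) (hbx : b ≠ x) (hxJ : x ∉ J)
    (hJ : ∀ v ∈ insert x J, ∃ p, IsRoute P b J v p) :
    ∃ P', IsPathDecomposition P' (s(b, x) ::ₘ F) (E + {b}) := by
  induction J using Finset.strongInduction generalizing P F x with
  | _ J ih =>
  obtain ⟨p, hp, hpx, hpJ⟩ := hJ x (Finset.mem_insert_self x J)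
  obtain ⟨t, rfl⟩ := List.head?_eq_some_iff.1 hpx
  by_cases hb : b ∈ x :: t
  · obtain ⟨q, r, hqr⟩ := List.append_of_mem hb
    have hq : q.head? = some x := by cases q <;> simp_all
    rw [hqr] at hp hpJ
    obtain ⟨l, hl⟩ : ∃ l, l ∈ q.getLast? :=
      ⟨_, List.getLast?_eq_some_getLast (by rintro rfl; simp at hq)⟩
    have hnodup : (q ++ b :: r).Nodup :=
      hp.elim (h.nodup _) fun hp => List.nodup_reverse.1 (h.nodup _ hp)
    have hlJ := hpJ l ((infix_pair_iff_mem_getLast? hnodup).2 hl)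
    have hlb : b ≠ l := by have := List.mem_of_getLast? hl; grind
    obtain ⟨P', F', hP', hF', hJ'⟩ := h.reroute hq hl hF hp
      (fun v hv => hJ v (Finset.mem_insert_of_mem hv)) hxJ
    rw [← hF'] at hF ⊢
    exact ih _ (Finset.erase_ssubset hlJ) hP' hF hlb (Finset.notMem_erase l J)
      (by rwa [Finset.insert_erase hlJ])
  · obtain ⟨Q, hQ, -⟩ := h.exists_cons hp
    refine ⟨(b :: x :: t) ::ₘ Q, hQ.replace (by simp)
      (List.nodup_cons.2 ⟨hb, hQ.nodup _ (Multiset.mem_cons_self _ _)⟩) ?_ ?_⟩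
    · rw [pathEdges_cons_cons, ← Multiset.cons_coe, Multiset.add_cons, Multiset.cons_add]
    · simp only [pathEnds, List.getLast_cons_cons]
      abel

omit [DecidableEq V] in
lemma IsPathDecomposition.exists_cons_edge (h : IsPathDecomposition P F (E + {x}))
    (hF : (s(b, x) ::ₘ F).Nodup) (hbx : b ≠ x) (hE : ∀ v, s(b, v) ∈ F → v ∈ E + {x}) :
    ∃ P', IsPathDecomposition P' (s(b, x) ::ₘ F) (E + {b}) := by
  classical
  let J := (E + {x}).toFinset.filter fun v => s(b, v) ∈ F
  refine h.exists_of_isRoute (J := J) hF hbx ?_ fun v hv => ?_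
  · exact fun hx => (Multiset.nodup_cons.1 hF).1 (Finset.mem_filter.1 hx).2
  · have hvE : v ∈ E + {x} := by
      rcases Finset.mem_insert.1 hv with rfl | hv
      · simp
      · exact Multiset.mem_toFinset.1 (Finset.mem_filter.1 hv).1
    obtain ⟨p, hp, hpv⟩ := h.exists_head_eq hvE
    refine ⟨p, hp, hpv, fun l hl => ?_⟩
    have hmem := mem_pathEdges_of_infix_pair hl
    have hlF : s(b, l) ∈ F := by
      rw [Sym2.eq_swap] at hmem
      rcases hp with hp | hp
      · exact h.mem_of_mem_pathEdges hp hmem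
      · exact h.mem_of_mem_pathEdges hp (by rwa [pathEdges_reverse, List.mem_reverse])
    exact Finset.mem_filter.2 ⟨Multiset.mem_toFinset.2 (hE l hlF), hlF⟩

lemma isPathDecomposition_zero (hE : ∀ v, Even (E.count v)) :
    ∃ P, IsPathDecomposition P 0 E := by
  induction h : E.card using Nat.strong_induction_on generalizing E with
  | _ k ih =>
  rcases E.empty_or_exists_mem with rfl | ⟨v, hv⟩
  · exact ⟨0, by simp, by simp, by simp, by simp⟩
  obtain ⟨E, rfl⟩ := Multiset.exists_cons_of_mem hv
  have hvE : v ∈ E := by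
    by_contra hvE
    simpa [Multiset.count_eq_zero.2 hvE] using hE v
  obtain ⟨E, rfl⟩ := Multiset.exists_cons_of_mem hvE
  obtain ⟨P, hP⟩ := ih E.card (by simp only [← h, Multiset.card_cons]; omega)
    (fun w => by
      have := hE w
      simp only [Multiset.count_cons] at this
      split_ifs at this <;> grind) rfl
  refine ⟨[v] ::ₘ P, ?_, ?_, ?_, ?_⟩
  · exact Multiset.forall_mem_cons.2 ⟨List.cons_ne_nil _ _, hP.ne_nil⟩
  · exact Multiset.forall_mem_cons.2 ⟨List.nodup_singleton v, hP.nodup⟩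
  · simpa using hP.edges
  · simp [pathEnds, hP.ends]

/-- Lovász's theorem on path decompositions: if at most one non-isolated vertex is missing from `E`,
then the parity condition suffices for `F` to decompose into paths with ends `E`. -/
theorem exists_isPathDecomposition (hF : F.Nodup) (hdiag : ∀ e ∈ F, ¬ e.IsDiag)
    (hpar : ∀ v, Even (E.count v + F.countP (v ∈ ·)))
    (hE : ∀ u v, u ∉ E → v ∉ E → (∃ e ∈ F, u ∈ e) → (∃ e ∈ F, v ∈ e) → u = v) :
    ∃ P, IsPathDecomposition P F E := by
  induction hk : F.card generalizing F E with
  | zero =>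
    rw [Multiset.card_eq_zero] at hk
    subst hk
    exact isPathDecomposition_zero fun v => by simpa using hpar v
  | succ k ih =>
    obtain ⟨b, x, hbx, hx⟩ : ∃ b x, s(b, x) ∈ F ∧ ∀ v, v ≠ x → (∃ e ∈ F, v ∈ e) → v ∈ E := by
      by_cases h : ∃ u, u ∉ E ∧ ∃ e ∈ F, u ∈ e
      · obtain ⟨x, hxE, e, heF, b, rfl⟩ := h
        exact ⟨b, x, Sym2.eq_swap ▸ heF, fun v hv hvF => by
          by_contra hvE
          exact hv (hE v x hvE hxE hvF ⟨_, heF, Sym2.mem_mk_left _ _⟩)⟩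
      · push Not at h
        obtain ⟨⟨b, x⟩, he⟩ := Multiset.card_pos_iff_exists_mem.1 (show 0 < F.card by omega)
        exact ⟨b, x, he, fun v _ ⟨e, heF, hve⟩ => by_contra fun hv => h v hv e heF hve⟩
    have hne : b ≠ x := fun h => hdiag _ hbx (Sym2.mk_isDiag_iff.2 h)
    obtain ⟨E, rfl⟩ := Multiset.exists_cons_of_mem (hx b hne ⟨_, hbx, Sym2.mem_mk_left _ _⟩)
    obtain ⟨F, rfl⟩ := Multiset.exists_cons_of_mem hbx
    have hmem : ∀ v, v ≠ b → (∃ e ∈ F, v ∈ e) → v ∈ E + {x} := fun v hvb ⟨e, heF, hve⟩ => by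
      by_cases hvx : v = x
      · simp [hvx]
      · have := hx v hvx ⟨e, Multiset.mem_cons_of_mem heF, hve⟩
        exact Multiset.mem_add.2 (Or.inl ((Multiset.mem_cons.1 this).resolve_left hvb))
    have hpar' : ∀ v, Even ((E + {x}).count v + F.countP (v ∈ ·)) := fun v => by
      have := hpar v
      simp only [Multiset.count_add, Multiset.count_cons, Multiset.count_singleton,
        Multiset.countP_cons, Sym2.mem_iff] at this ⊢
      grind
    obtain ⟨P, hP⟩ := ih (Multiset.nodup_cons.1 hF).2
      (fun e he => hdiag e (Multiset.mem_cons_of_mem he)) hpar'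
      (fun u v hu hv huF hvF => by
        rw [by_contra fun h => hu (hmem u h huF), by_contra fun h => hv (hmem v h hvF)])
      (by simpa using hk)
    rw [← Multiset.singleton_add b E, add_comm {b} E]
    refine hP.exists_cons_edge hF hne fun v hv => hmem v ?_ ⟨_, hv, Sym2.mem_mk_right _ _⟩
    rintro rfl
    exact hdiag _ (Multiset.mem_cons_of_mem hv) (Sym2.mk_isDiag_iff.2 rfl)

end AddEdge

/-! ### Closing up paths through a dominating vertex -/

section CloseUp

variable {G : SimpleGraph V} {b : V}

lemma mem_head_or_mem_pathEdges {p : List V} {v : V} (hv : v ∈ p) :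
    p = [v] ∨ ∃ e ∈ pathEdges p, v ∈ e := by
  induction p with
  | nil => simp at hv
  | cons a l ih =>
    cases l with
    | nil => simp_all
    | cons c l =>
      rcases List.mem_cons.1 hv with rfl | hv
      · exact Or.inr ⟨s(v, c), by simp, Sym2.mem_mk_left _ _⟩
      · rcases ih hv with h | ⟨e, he, hve⟩
        · exact Or.inr ⟨s(a, c), by simp, by simp [(List.cons.inj h).1]⟩
        · exact Or.inr ⟨e, by simp [he], hve⟩

lemma exists_isCycleList_of_path {p : List V} (hp : p ≠ []) (hnodup : p.Nodup)
    (hG : ∀ e ∈ pathEdges p, e ∈ G.edgeSet) (hb : ∀ v ∈ p, G.Adj b v)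
    (hz : ∀ v ∈ p, ∃ z, G.Adj b z ∧ G.Adj v z) :
    ∃ c, IsCycleList G c ∧ (∀ e ∈ pathEdges p, e ∈ cycleEdges c) ∧
      ∀ v ∈ pathEnds p, s(b, v) ∈ cycleEdges c := by
  by_cases hlen : p.length = 1
  · obtain ⟨v, rfl⟩ := List.length_eq_one_iff.1 hlen
    obtain ⟨z, hbz, hvz⟩ := hz v (List.mem_singleton_self v)
    have hbv := hb v (List.mem_singleton_self v)
    refine ⟨[b, v, z], ⟨?_, by simp, ?_⟩, by simp, ?_⟩
    · have := hbv.ne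
      have := hbz.ne
      have := hvz.ne
      grind
    · simp [cycleEdges_cons, hbv, hvz, hbz.symm]
    · simp [cycleEdges_cons, pathEnds]
  · have hcycle : cycleEdges (b :: p) =
        s(b, p.head hp) :: (pathEdges p ++ [s(b, p.getLast hp)]) :=
      pathEdges_cons_concat b b hp
    refine ⟨b :: p, ⟨List.nodup_cons.2 ⟨fun h => (hb b h).ne rfl, hnodup⟩, ?_, ?_⟩, ?_, ?_⟩
    · have := List.length_pos_iff.2 hp
      simp only [List.length_cons]
      omega
    · intro e he
      simp only [hcycle, List.mem_cons, List.mem_append, List.not_mem_nil, or_false] at he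
      rcases he with rfl | he | rfl
      · exact hb _ (List.head_mem hp)
      · exact hG e he
      · exact hb _ (List.getLast_mem hp)
    · intro e he
      simp [hcycle, he]
    · intro v hv
      rw [pathEnds_eq hp, Multiset.mem_add, Multiset.mem_singleton, Multiset.mem_singleton] at hv
      rw [hcycle]
      rcases hv with rfl | rfl
      · simp
      · simp

/-- The vertex `b` lies on no isolated edge and is adjacent to all other non-isolated vertices. -/
structure IsDominating (G : SimpleGraph V) (b : V) : Prop where
  adj : ∀ ⦃x y⦄, G.Adj x y → x ≠ b → G.Adj b x
  exists_adj : ∀ ⦃v⦄, G.Adj b v → ∃ z, z ≠ b ∧ G.Adj v z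

variable {P : Multiset (List V)} {F : Multiset (Sym2 V)} {E : Multiset V} {C : List (List V)}

lemma IsPathDecomposition.card_ends (h : IsPathDecomposition P F E) : E.card = 2 * P.card := by
  have hmap : P.map (Multiset.card ∘ pathEnds) = P.map fun _ => 2 :=
    Multiset.map_congr rfl fun p hp => by simp [pathEnds_eq (h.ne_nil p hp)]
  rw [← h.ends, Multiset.card_bind, hmap, Multiset.map_const', Multiset.sum_replicate, smul_eq_mul,
    mul_comm]

lemma IsPathDecomposition.exists_isCycleCover (h : IsPathDecomposition P F E)
    (hb : IsDominating G b) (hF : ∀ e ∈ F, e ∈ G.edgeSet ∧ b ∉ e) (hE : ∀ v ∈ E, G.Adj b v)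
    (hC : ∀ c ∈ C, IsCycleList G c)
    (hcov : ∀ x y, G.Adj x y → b ≠ x → b ≠ y → s(x, y) ∈ F ∨ Covers C s(x, y))
    (hcovb : ∀ v, G.Adj b v → v ∈ E ∨ Covers C s(b, v)) :
    ∃ L, IsCycleCover G L ∧ 2 * L.length = 2 * C.length + E.card := by
  have hpb : ∀ p ∈ P, ∀ v ∈ p, G.Adj b v := fun p hp v hv => by
    rcases mem_head_or_mem_pathEdges hv with rfl | ⟨e, he, w, rfl⟩
    · exact hE v (h.mem_of_mem_pathEnds hp (by simp [pathEnds]))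
    · obtain ⟨hvw, hbe⟩ := hF _ (h.mem_of_mem_pathEdges hp he)
      exact hb.adj hvw fun hvb => hbe (hvb ▸ Sym2.mem_mk_left _ _)
  choose! cycle hcycle hedges hends using fun p (hp : p ∈ P) =>
    exists_isCycleList_of_path (h.ne_nil p hp) (h.nodup p hp)
      (fun e he => (hF e (h.mem_of_mem_pathEdges hp he)).1) (hpb p hp) fun v hv => by
        obtain ⟨z, hzb, hvz⟩ := hb.exists_adj (hpb p hp v hv)
        exact ⟨z, hb.adj hvz.symm hzb, hvz⟩
  have hcov₁ : ∀ x y, G.Adj x y → b ≠ x → b ≠ y → Covers (C ++ P.toList.map cycle) s(x, y) := by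
    intro x y hxy hbx hby
    rw [covers_append]
    refine (hcov x y hxy hbx hby).symm.imp_right fun hF => ?_
    obtain ⟨p, hp, hpe⟩ := Multiset.mem_bind.1 (h.edges.symm ▸ hF)
    exact ⟨cycle p, List.mem_map_of_mem (Multiset.mem_toList.2 hp), hedges p hp _ hpe⟩
  have hcov₂ : ∀ v, G.Adj b v → Covers (C ++ P.toList.map cycle) s(b, v) := by
    intro v hv
    rw [covers_append]
    refine (hcovb v hv).symm.imp_right fun hE => ?_
    obtain ⟨p, hp, hpe⟩ := Multiset.mem_bind.1 (h.ends.symm ▸ hE)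
    exact ⟨cycle p, List.mem_map_of_mem (Multiset.mem_toList.2 hp), hends p hp v hpe⟩
  refine ⟨C ++ P.toList.map cycle, ⟨fun c hc => ?_, fun x y hxy => ?_⟩, ?_⟩
  · rcases List.mem_append.1 hc with hc | hc
    · exact hC c hc
    · obtain ⟨p, hp, rfl⟩ := List.mem_map.1 hc
      exact hcycle p (Multiset.mem_toList.1 hp)
  · by_cases hx : b = x
    · exact hx ▸ hcov₂ y (hx ▸ hxy)
    by_cases hy : b = y
    · exact Sym2.eq_swap ▸ hy ▸ hcov₂ x (hy ▸ hxy.symm)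
    exact hcov₁ x y hxy hx hy
  · rw [h.card_ends, List.length_append, List.length_map, Multiset.length_toList, mul_add]

lemma even_card_filter_add_countP {α : Type*} [DecidableEq α] {s : Finset α} {M : Multiset α}
    (hM : ∀ a ∈ M, a ∈ s) (p : α → Prop) [DecidablePred p] :
    Even ((s.filter fun a => Even (M.count a) ∧ p a).card + (s.filter p).card + M.countP p) := by
  have hsum : M.countP p = ∑ a ∈ s.filter p, M.count a := by
    rw [Multiset.countP_eq_card_filter, ← Multiset.sum_count_eq_card (s := s.filter p)]
    · exact Finset.sum_congr rfl fun a ha => Multiset.count_filter_of_pos (Finset.mem_filter.1 ha).2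
    · intro a ha
      rw [Multiset.mem_filter] at ha
      exact Finset.mem_filter.2 ⟨hM a ha.1, ha.2⟩
  have hodd := Finset.odd_sum_iff_odd_card_odd (s := s.filter p) fun a => M.count a
  have hcard := Finset.card_filter_add_card_filter_not (s := s.filter p) fun a => Even (M.count a)
  simp only [Finset.filter_filter, Nat.not_even_iff_odd, ← hsum] at hodd hcard
  simp only [and_comm (a := p _)] at hodd hcard
  grind

lemma card_filter_mem_filter_notMem_edgeFinset [DecidableEq V] (G : SimpleGraph V)
    [Fintype G.edgeSet] {b v : V} (hvb : v ≠ b) :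
    ((G.edgeFinset.filter (b ∉ ·)).filter (v ∈ ·)).card = (G.neighborSet v \ {b}).ncard := by
  have himage : ((G.edgeFinset.filter (b ∉ ·)).filter (v ∈ ·) : Set (Sym2 V)) =
      (s(v, ·)) '' (G.neighborSet v \ {b}) := by
    ext e
    simp only [Finset.coe_filter, Finset.mem_filter, mem_edgeFinset]
    constructor
    · rintro ⟨⟨he, hbe⟩, w, rfl⟩
      exact ⟨w, ⟨he, by rintro rfl; exact hbe (Sym2.mem_mk_right _ _)⟩, rfl⟩
    · rintro ⟨w, ⟨hvw, hwb⟩, rfl⟩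
      exact ⟨⟨hvw, by simp [hvb.symm, Ne.symm hwb]⟩, Sym2.mem_mk_left _ _⟩
  rw [← Set.ncard_coe_finset, himage, Set.ncard_image_of_injective]
  exact fun x y h => Sym2.congr_right.1 h

/-- Cover the edges in `M` by `C`, and let the edges avoiding `b` that `M` repeats an even number of
times decompose into paths with ends `E`. -/
lemma exists_isCycleCover_of_even [Finite V] [DecidableEq V] (hb : IsDominating G b)
    (hC : ∀ c ∈ C, IsCycleList G c) {M : Multiset (Sym2 V)}
    (hM : ∀ e ∈ M, e ∈ G.edgeSet ∧ b ∉ e ∧ Covers C e) (hE : ∀ v ∈ E, G.Adj b v)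
    (hpar : ∀ v, G.Adj b v → Even (E.count v + M.countP (v ∈ ·) + (G.neighborSet v \ {b}).ncard))
    (hbad : ∀ u v, G.Adj b u → G.Adj b v → u ∉ E → v ∉ E → u = v)
    (hcovb : ∀ v, G.Adj b v → v ∈ E ∨ Covers C s(b, v)) :
    ∃ L, IsCycleCover G L ∧ 2 * L.length = 2 * C.length + E.card := by
  classical
  have := Fintype.ofFinite V
  let H := G.edgeFinset.filter (b ∉ ·)
  have hMH : ∀ e ∈ M, e ∈ H := fun e he =>
    Finset.mem_filter.2 ⟨mem_edgeFinset.2 (hM e he).1, (hM e he).2.1⟩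
  let F := H.filter fun e => Even (M.count e)
  have hF : ∀ e ∈ F, e ∈ G.edgeSet ∧ b ∉ e := fun e he => by
    simpa [H] using (Finset.mem_filter.1 he).1
  have hFb : ∀ v, (∃ e ∈ F.val, v ∈ e) → G.Adj b v := by
    rintro v ⟨e, he, w, rfl⟩
    obtain ⟨hvw, hbe⟩ := hF _ he
    exact hb.adj hvw fun hvb => hbe (hvb ▸ Sym2.mem_mk_left _ _)
  have hparF : ∀ v, Even (E.count v + F.val.countP (v ∈ ·)) := fun v => by
    by_cases hbv : G.Adj b v
    · have h₁ := hpar v hbv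
      have h₂ := even_card_filter_add_countP hMH (v ∈ ·)
      rw [card_filter_mem_filter_notMem_edgeFinset G hbv.ne'] at h₂
      rw [Multiset.countP_eq_card_filter, ← Finset.filter_val, Finset.filter_filter,
        Finset.card_val]
      grind
    · rw [Multiset.count_eq_zero.2 fun hv => hbv (hE v hv),
        Multiset.countP_eq_zero.2 fun e he hve => hbv (hFb v ⟨e, he, hve⟩)]
      exact Even.zero
  obtain ⟨P, hP⟩ := exists_isPathDecomposition F.nodup
    (fun e he => G.not_isDiag_of_mem_edgeSet (hF e he).1) hparF
    fun u v hu hv huF hvF => hbad u v (hFb u huF) (hFb v hvF) hu hv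
  refine hP.exists_isCycleCover hb hF hE hC (fun x y hxy hbx hby => ?_) hcovb
  have hxyH : s(x, y) ∈ H := Finset.mem_filter.2 ⟨mem_edgeFinset.2 hxy, by simp [hbx, hby]⟩
  by_cases heven : Even (M.count s(x, y))
  · exact Or.inl (Finset.mem_filter.2 ⟨hxyH, heven⟩)
  · refine Or.inr (hM _ (Multiset.count_pos.1 (Nat.pos_of_ne_zero fun h0 => heven ?_))).2.2
    rw [h0]
    exact Even.zero

end CloseUp

/-! ### Two dominating vertices -/

section PathPair

lemma even_countP_pathEdges_add_count_pathEnds [DecidableEq V] {p : List V} (hp : p.Nodup) (v : V) :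
    Even ((pathEdges p : Multiset (Sym2 V)).countP (v ∈ ·) + (pathEnds p).count v) := by
  induction p with
  | nil => simp [pathEnds]
  | cons a l ih =>
    cases l with
    | nil => by_cases hva : v = a <;> simp [pathEnds, hva]
    | cons b l =>
      have hab : a ≠ b := by rintro rfl; simp at hp
      have hl := ih (List.nodup_cons.1 hp).2
      rw [pathEdges_cons_cons, ← Multiset.cons_coe, Multiset.countP_cons]
      simp only [pathEnds, List.getLast_cons_cons, Multiset.count_add, Multiset.count_singleton,
        Sym2.mem_iff] at hl ⊢
      grind

/-- The edges of a pair of paths. -/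
def pairEdges (g : List V × List V) : Multiset (Sym2 V) := pathEdges g.1 + pathEdges g.2

/-- The ends of a pair of paths. -/
def pairEnds (g : List V × List V) : Multiset V := pathEnds g.1 + pathEnds g.2

/-- Two disjoint paths of `D` with vertices in `W`. The first one may be empty. -/
structure IsPathPair (D : SimpleGraph V) (W : Finset V) (g : List V × List V) : Prop where
  nodup : (g.1 ++ g.2).Nodup
  mem : ∀ v ∈ g.1 ++ g.2, v ∈ W
  mem_edgeSet : ∀ e ∈ pairEdges g, e ∈ D.edgeSet
  snd_ne_nil : g.2 ≠ []

lemma even_countP_bind_pairEdges [DecidableEq V] {gs : Multiset (List V × List V)}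
    (hgs : ∀ g ∈ gs, (g.1 ++ g.2).Nodup) (v : V) :
    Even ((gs.bind pairEdges).countP (v ∈ ·) + (gs.bind pairEnds).count v) := by
  induction gs using Multiset.induction_on with
  | empty => simp
  | cons g gs ih =>
    have h := ih fun g hg => hgs g (Multiset.mem_cons_of_mem hg)
    have hnodup := List.nodup_append.1 (hgs g (Multiset.mem_cons_self g gs))
    have h₁ := even_countP_pathEdges_add_count_pathEnds hnodup.1 v
    have h₂ := even_countP_pathEdges_add_count_pathEnds hnodup.2.1 v
    simp only [Multiset.cons_bind, pairEdges, pairEnds, Multiset.countP_add, Multiset.count_add]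
    grind

lemma even_countP_pathEdges_fst_add_bind [DecidableEq V] {g : List V × List V}
    {gs : Multiset (List V × List V)} (hgs : ∀ g' ∈ g ::ₘ gs, (g'.1 ++ g'.2).Nodup)
    (hg : g.2 ≠ []) (v : V) :
    Even ((pathEdges g.1 + gs.bind pairEdges).countP (v ∈ ·) + ((g ::ₘ gs).bind pairEnds).count v +
      ({g.2.head hg} + {g.2.getLast hg} : Multiset V).count v) := by
  have h := even_countP_bind_pairEdges hgs v
  have hnodup := (List.nodup_append.1 (hgs g (Multiset.mem_cons_self _ _))).2.1
  have hsnd := even_countP_pathEdges_add_count_pathEnds hnodup v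
  rw [pathEnds_eq hg] at hsnd
  rw [Multiset.cons_bind, pairEdges] at h
  simp only [Multiset.countP_add] at h ⊢
  grind

end PathPair

lemma count_erase_val_add_singleton [DecidableEq V] (W : Finset V) (y b v : V) :
    ((W.erase y).val + {b}).count v =
      (if v ∈ W ∧ v ≠ y then 1 else 0) + if v = b then 1 else 0 := by
  rw [Multiset.count_add, Multiset.count_eq_of_nodup (Finset.nodup _), Multiset.count_singleton]
  simp only [Finset.mem_val, Finset.mem_erase, and_comm]

lemma card_erase_val_add_singleton [DecidableEq V] {W : Finset V} {y : V} (hy : y ∈ W) (b : V) :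
    ((W.erase y).val + {b}).card = W.card := by
  rw [Multiset.card_add, Multiset.card_singleton, Finset.card_val, Finset.card_erase_add_one hy]

/-- `b₁` and `b₂` are adjacent to each other and to every vertex in the nonempty set `W`, and all
further vertices are isolated. -/
structure IsDominatingPair (G : SimpleGraph V) (b₁ b₂ : V) (W : Finset V) : Prop where
  adj : G.Adj b₁ b₂
  adj_left : ∀ w ∈ W, G.Adj b₁ w
  adj_right : ∀ w ∈ W, G.Adj b₂ w
  eq_or_mem : ∀ ⦃x y⦄, G.Adj x y → x = b₁ ∨ x = b₂ ∨ x ∈ W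
  nonempty : W.Nonempty

namespace IsDominatingPair

variable {G : SimpleGraph V} {b₁ b₂ : V} {W : Finset V} (h : IsDominatingPair G b₁ b₂ W)

include h

lemma notMem_left : b₁ ∉ W := fun hW => (h.adj_left _ hW).ne rfl

lemma notMem_right : b₂ ∉ W := fun hW => (h.adj_right _ hW).ne rfl

lemma isDominating : IsDominating G b₁ where
  adj x y hxy hx := by
    rcases h.eq_or_mem hxy with hx' | rfl | hx'
    · exact absurd hx' hx
    · exact h.adj
    · exact h.adj_left x hx'
  exists_adj v hv := by
    rcases h.eq_or_mem hv.symm with rfl | rfl | hvW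
    · exact absurd rfl hv.ne
    · obtain ⟨w, hw⟩ := h.nonempty
      exact ⟨w, (h.adj_left w hw).ne', h.adj_right w hw⟩
    · exact ⟨b₂, h.adj.ne', (h.adj_right v hvW).symm⟩

lemma adj_left_iff {v : V} : G.Adj b₁ v ↔ v = b₂ ∨ v ∈ W := by
  refine ⟨fun hv => (h.eq_or_mem hv.symm).resolve_left hv.ne', ?_⟩
  rintro (rfl | hv)
  exacts [h.adj, h.adj_left v hv]

lemma adj_right_iff {v : V} : G.Adj b₂ v ↔ v = b₁ ∨ v ∈ W := by
  refine ⟨fun hv => (h.eq_or_mem hv.symm).imp_right fun h => h.resolve_left hv.ne', ?_⟩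
  rintro (rfl | hv)
  exacts [h.adj.symm, h.adj_right v hv]

lemma ncard_neighborSet_diff_left_of_mem [Finite V] {v : V} (hv : v ∈ W) :
    (G.neighborSet v \ {b₁}).ncard = ((restrict G W).neighborSet v).ncard + 1 := by
  have hinsert : G.neighborSet v \ {b₁} = insert b₂ ((restrict G W).neighborSet v) := by
    ext y
    have := h.notMem_left
    have := h.adj.ne
    have := h.adj_right v hv
    have := fun hy : G.Adj v y => h.eq_or_mem hy.symm
    simp only [Set.mem_sdiff, mem_neighborSet, Set.mem_singleton_iff, Set.mem_insert_iff,
      restrict_adj, SetLike.mem_coe]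
    grind [SimpleGraph.adj_comm]
  rw [hinsert, Set.ncard_insert_of_notMem]
  exact fun hb => h.notMem_right (restrict_adj.1 hb).2.2

lemma ncard_neighborSet_right_diff_left : (G.neighborSet b₂ \ {b₁}).ncard = W.card := by
  rw [← Set.ncard_coe_finset]
  congr 1
  ext y
  have := h.notMem_left
  simp only [Set.mem_sdiff, mem_neighborSet, Set.mem_singleton_iff, h.adj_right_iff,
    SetLike.mem_coe]
  grind

lemma ncard_neighborSet_restrict_right : ((restrict G W).neighborSet b₂).ncard = 0 := by
  have hempty : (restrict G W).neighborSet b₂ = ∅ :=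
    Set.eq_empty_of_forall_notMem fun y hy => h.notMem_right (restrict_adj.1 hy).2.1
  rw [hempty, Set.ncard_empty]

lemma isCycleList_of_isPathPair {g : List V × List V} (hg : IsPathPair (restrict G W) W g) :
    IsCycleList G (b₁ :: (g.1 ++ b₂ :: g.2)) ∧
      (∀ e ∈ pairEdges g, e ∈ cycleEdges (b₁ :: (g.1 ++ b₂ :: g.2))) ∧
      s(b₂, g.2.head hg.snd_ne_nil) ∈ cycleEdges (b₁ :: (g.1 ++ b₂ :: g.2)) ∧
      s(b₁, g.2.getLast hg.snd_ne_nil) ∈ cycleEdges (b₁ :: (g.1 ++ b₂ :: g.2)) := by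
  obtain ⟨p, q⟩ := g
  obtain ⟨hnodup, hW, hedges, hq⟩ := hg
  simp only [pairEdges, Multiset.coe_add, Multiset.mem_coe] at hnodup hW hedges hq ⊢
  have hedgesG : ∀ e ∈ pathEdges p ++ pathEdges q, e ∈ G.edgeSet := fun e he =>
    edgeSet_mono (restrict_le G W) (hedges e he)
  have hp₁ : ∀ e ∈ pathEdges p, e ∈ pathEdges (b₁ :: (p ++ [b₂])) := fun e he => by
    rw [pathEdges_cons_concat b₁ b₂ (by rintro rfl; simp at he)]
    simp [he]
  have hp₂ : ∀ e ∈ pathEdges (b₁ :: (p ++ [b₂])), e ∈ G.edgeSet := fun e he => by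
    by_cases hp : p = []
    · subst hp
      obtain rfl : e = s(b₁, b₂) := by simpa using he
      exact h.adj
    · simp only [pathEdges_cons_concat b₁ b₂ hp, List.mem_cons, List.mem_append,
        List.not_mem_nil, or_false] at he
      rcases he with rfl | he | rfl
      · exact h.adj_left _ (hW _ (List.mem_append_left _ (List.head_mem hp)))
      · exact hedgesG e (List.mem_append_left _ he)
      · exact h.adj_right _ (hW _ (List.mem_append_left _ (List.getLast_mem hp)))
  rw [cycleEdges_cons_append_cons, pathEdges_cons_concat b₂ b₁ hq]
  refine ⟨⟨?_, ?_, fun e he => ?_⟩, fun e he => ?_, ?_, ?_⟩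
  · rw [(List.perm_middle.cons b₁).nodup_iff, List.nodup_cons, List.nodup_cons, List.mem_cons]
    exact ⟨not_or.2 ⟨h.adj.ne, fun hb => h.notMem_left (hW _ hb)⟩,
      fun hb => h.notMem_right (hW _ hb), hnodup⟩
  · have := List.length_pos_iff.2 hq
    simp only [List.length_cons, List.length_append]
    omega
  · simp only [cycleEdges_cons_append_cons, pathEdges_cons_concat b₂ b₁ hq, List.mem_append,
      List.mem_cons, List.not_mem_nil, or_false] at he
    rcases he with he | rfl | he | rfl
    · exact hp₂ e he
    · exact h.adj_right _ (hW _ (List.mem_append_right _ (List.head_mem hq)))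
    · exact hedgesG e (List.mem_append_right _ he)
    · exact h.adj_left _ (hW _ (List.mem_append_right _ (List.getLast_mem hq)))
  · rcases List.mem_append.1 he with he | he
    · exact List.mem_append_left _ (hp₁ e he)
    · simp [he]
  · simp
  · simp

/-- The end `E` and the repeated edges `M` are as in `exists_isCycleCover_of_even`; the pairs of
paths in `gs` are closed up through `b₁` and `b₂`. -/
lemma exists_isCycleCover_of_even [Finite V] [DecidableEq V] {gs : Multiset (List V × List V)}
    (hgs : ∀ g ∈ gs, IsPathPair (restrict G W) W g) {M : Multiset (Sym2 V)} {E : Multiset V}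
    (hM : ∀ e ∈ M, (∃ g ∈ gs, e ∈ pairEdges g) ∨
      ∃ g, ∃ hg : g ∈ gs, e = s(b₂, g.2.head (hgs g hg).snd_ne_nil))
    (hE : ∀ v ∈ E, v = b₂ ∨ v ∈ W)
    (hpar : ∀ v ∈ W,
      Even (E.count v + M.countP (v ∈ ·) + (((restrict G W).neighborSet v).ncard + 1)))
    (hpar₂ : Even (E.count b₂ + M.countP (b₂ ∈ ·) + W.card)) (hE₂ : b₂ ∈ E)
    (hbad : ∀ u ∈ W, ∀ v ∈ W, u ∉ E → v ∉ E → u = v)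
    (hcov : ∀ v ∈ W, v ∈ E ∨ ∃ g, ∃ hg : g ∈ gs, v = g.2.getLast (hgs g hg).snd_ne_nil) :
    ∃ L, IsCycleCover G L ∧ 2 * L.length = 2 * gs.card + E.card := by
  let C := gs.toList.map fun g => b₁ :: (g.1 ++ b₂ :: g.2)
  have hcycle := fun g hg => h.isCycleList_of_isPathPair (hgs g hg)
  have hC : ∀ g ∈ gs, ∀ e ∈ cycleEdges (b₁ :: (g.1 ++ b₂ :: g.2)), Covers C e := fun g hg e he =>
    ⟨_, List.mem_map_of_mem (Multiset.mem_toList.2 hg), he⟩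
  have hlen : C.length = gs.card := by rw [List.length_map, Multiset.length_toList]
  rw [← hlen]
  refine CycleCover.exists_isCycleCover_of_even h.isDominating (fun c hc => ?_) (M := M)
    (fun e he => ?_) (fun v hv => h.adj_left_iff.2 (hE v hv)) (fun v hv => ?_)
    (fun u v hu hv huE hvE => ?_) fun v hv => ?_
  · obtain ⟨g, hg, rfl⟩ := List.mem_map.1 hc
    exact (hcycle g (Multiset.mem_toList.1 hg)).1
  · rcases hM e he with ⟨g, hg, heg⟩ | ⟨g, hg, rfl⟩
    · have heD := (hgs g hg).mem_edgeSet e heg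
      refine ⟨edgeSet_mono (restrict_le G W) heD, ?_, hC g hg e ((hcycle g hg).2.1 e heg)⟩
      rintro ⟨w, rfl⟩
      exact h.notMem_left (restrict_adj.1 heD).2.1
    · have hW := (hgs g hg).mem _ (List.mem_append_right _ (List.head_mem (hgs g hg).snd_ne_nil))
      refine ⟨h.adj_right _ hW, ?_, hC g hg _ (hcycle g hg).2.2.1⟩
      rw [Sym2.mem_iff, not_or]
      exact ⟨h.adj.ne, (h.adj_left _ hW).ne⟩
  · rcases h.adj_left_iff.1 hv with rfl | hvW
    · rw [h.ncard_neighborSet_right_diff_left]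
      exact hpar₂
    · rw [h.ncard_neighborSet_diff_left_of_mem hvW]
      exact hpar v hvW
  · have hmem := fun w (hw : G.Adj b₁ w) (hwE : w ∉ E) =>
      (h.adj_left_iff.1 hw).resolve_left fun hw => hwE (hw ▸ hE₂)
    exact hbad u (hmem u hu huE) v (hmem v hv hvE) huE hvE
  · rcases h.adj_left_iff.1 hv with rfl | hvW
    · exact Or.inl hE₂
    · refine (hcov v hvW).imp_right ?_
      rintro ⟨g, hg, rfl⟩
      exact hC g hg _ (hcycle g hg).2.2.2

variable [Finite V] [DecidableEq V] {gs : Multiset (List V × List V)}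

lemma exists_isCycleCover_of_ends_eq (hgs : ∀ g ∈ gs, IsPathPair (restrict G W) W g)
    (hends : ∀ v, (gs.bind pairEnds).count v =
      ((restrict G W).neighborSet v).ncard % 2) {j : ℕ} (hj : 0 < j) (hjW : Even (j + W.card)) :
    ∃ L, IsCycleCover G L ∧ 2 * L.length = 2 * gs.card + (W.card + j) := by
  have hcard : (W.val + Multiset.replicate j b₂).card = W.card + j := by simp
  have hb₂ : b₂ ∈ Multiset.replicate j b₂ := Multiset.mem_replicate.2 ⟨hj.ne', rfl⟩
  have hedges : ∀ e ∈ gs.bind pairEdges, ∃ g ∈ gs, e ∈ pairEdges g :=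
    fun e he => Multiset.mem_bind.1 he
  have hpar := even_countP_bind_pairEdges fun g hg => (hgs g hg).nodup
  rw [← hcard]
  refine h.exists_isCycleCover_of_even hgs (M := gs.bind pairEdges)
    (fun e he => Or.inl (hedges e he))
    (fun v hv => (Multiset.mem_add.1 hv).symm.imp_left Multiset.eq_of_mem_replicate)
    (fun v hv => ?_) ?_ (Multiset.mem_add.2 (Or.inr hb₂)) (fun u hu v _ huE => ?_)
    (fun v hv => Or.inl ?_)
  · have hvb₂ : v ≠ b₂ := fun hv' => h.notMem_right (hv' ▸ hv)
    have hvpar := hpar v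
    rw [hends v] at hvpar
    rw [Multiset.count_add, Multiset.count_eq_one_of_mem W.nodup hv, Multiset.count_replicate,
      if_neg hvb₂.symm]
    grind
  · have hb₂par := hpar b₂
    rw [hends b₂, h.ncard_neighborSet_restrict_right] at hb₂par
    rw [Multiset.count_add, Multiset.count_eq_zero_of_notMem (fun hW => h.notMem_right hW),
      Multiset.count_replicate_self]
    grind
  · exact absurd (Multiset.mem_add.2 (Or.inl hu)) huE
  · exact Multiset.mem_add.2 (Or.inl hv)

lemma exists_isCycleCover_of_ends_eq_of_even {g : List V × List V}
    (hgs : ∀ g' ∈ g ::ₘ gs, IsPathPair (restrict G W) W g')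
    (hends : ∀ v, ((g ::ₘ gs).bind pairEnds).count v = ((restrict G W).neighborSet v).ncard % 2)
    (hW : Even W.card) :
    ∃ L, IsCycleCover G L ∧ 2 * L.length = 2 * (gs.card + 1) + W.card := by
  have hg := hgs g (Multiset.mem_cons_self _ _)
  have hmem := fun v (hv : v ∈ g.2) => hg.mem v (List.mem_append_right _ hv)
  set x := g.2.head hg.snd_ne_nil with hx
  set y := g.2.getLast hg.snd_ne_nil with hy
  have hxW : x ∈ W := hmem x (List.head_mem _)
  have hyW : y ∈ W := hmem y (List.getLast_mem _)
  have hE : ∀ v, v ∈ (W.erase y).val + {b₂} ↔ v ≠ y ∧ v ∈ W ∨ v = b₂ := fun v => by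
    rw [Multiset.mem_add, Finset.mem_val, Finset.mem_erase, Multiset.mem_singleton]
  have hne : ∀ v ∈ W, v ≠ b₂ := fun v hv hvb => h.notMem_right (hvb ▸ hv)
  have hpar := even_countP_pathEdges_fst_add_bind (fun g hg => (hgs g hg).nodup) hg.snd_ne_nil
  simp only [hends, ← hx, ← hy, Multiset.count_add, Multiset.count_singleton] at hpar
  have hcard : 2 * (gs.card + 1) + W.card =
      2 * (g ::ₘ gs).card + ((W.erase y).val + {b₂}).card := by
    rw [card_erase_val_add_singleton hyW, Multiset.card_cons]
  rw [hcard]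
  refine h.exists_isCycleCover_of_even hgs
    (M := s(b₂, x) ::ₘ (pathEdges g.1 + gs.bind pairEdges)) (fun e he => ?_) (fun v hv => ?_)
    (fun v hv => ?_) ?_ ((hE b₂).2 (Or.inr rfl)) (fun u hu v hv huE hvE => ?_) (fun v hv => ?_)
  · rcases Multiset.mem_cons.1 he with rfl | he
    · exact Or.inr ⟨g, Multiset.mem_cons_self _ _, rfl⟩
    · rcases Multiset.mem_add.1 he with he | he
      · exact Or.inl ⟨g, Multiset.mem_cons_self _ _, Multiset.mem_add.2 (Or.inl he)⟩
      · obtain ⟨g', hg', he⟩ := Multiset.mem_bind.1 he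
        exact Or.inl ⟨g', Multiset.mem_cons_of_mem hg', he⟩
  · exact ((hE v).1 hv).symm.imp_right And.right
  · have := hpar v
    have := hne v hv
    rw [count_erase_val_add_singleton, Multiset.countP_cons]
    simp only [Sym2.mem_iff]
    grind
  · have := hpar b₂
    rw [h.ncard_neighborSet_restrict_right] at this
    have := hne x hxW
    have := hne y hyW
    have := h.notMem_right
    rw [count_erase_val_add_singleton, Multiset.countP_cons]
    simp only [Sym2.mem_iff]
    grind
  · by_contra huv
    grind
  · by_cases hvy : v = y
    · exact Or.inr ⟨g, Multiset.mem_cons_self _ _, hvy⟩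
    · exact Or.inl ((hE v).2 (Or.inl ⟨hvy, hv⟩))

theorem exists_isCycleCover_of_four_mul_card_le (hgs : ∀ g ∈ gs, IsPathPair (restrict G W) W g)
    (hends : ∀ v, (gs.bind pairEnds).count v = ((restrict G W).neighborSet v).ncard % 2)
    (hcard : 4 * gs.card ≤ W.card + 2) :
    ∃ L, IsCycleCover G L ∧ 4 * L.length ≤ 3 * (W.card + 1) := by
  have hW := h.nonempty.card_pos
  rcases Nat.even_or_odd W.card with heven | hodd
  · rcases gs.empty_or_exists_mem with rfl | ⟨g, hg⟩
    · obtain ⟨L, hL, hlen⟩ :=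
        h.exists_isCycleCover_of_ends_eq hgs hends two_pos (even_two.add heven)
      exact ⟨L, hL, by rw [Multiset.card_zero] at hlen; omega⟩
    · obtain ⟨gs, rfl⟩ := Multiset.exists_cons_of_mem hg
      obtain ⟨L, hL, hlen⟩ := h.exists_isCycleCover_of_ends_eq_of_even hgs hends heven
      exact ⟨L, hL, by rw [Multiset.card_cons] at hcard; omega⟩
  · obtain ⟨L, hL, hlen⟩ :=
      h.exists_isCycleCover_of_ends_eq hgs hends one_pos (odd_one.add_odd hodd)
    exact ⟨L, hL, by obtain ⟨k, hk⟩ := hodd; omega⟩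

end IsDominatingPair

/-! ### Pairing up the vertices of odd degree -/

section Pairing

variable {α κ : Type*}

/-- The entries of all pairs in `P`, used to regard `P` as a partial matching of `α`. -/
def entries (P : Multiset (α × α)) : Multiset α := P.map Prod.fst + P.map Prod.snd

lemma card_entries (P : Multiset (α × α)) : (entries P).card = 2 * P.card := by
  rw [entries, Multiset.card_add, Multiset.card_map, Multiset.card_map, two_mul]

lemma fst_mem_entries {P : Multiset (α × α)} {p : α × α} (hp : p ∈ P) : p.1 ∈ entries P :=
  Multiset.mem_add.2 (Or.inl (Multiset.mem_map_of_mem _ hp))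

lemma snd_mem_entries {P : Multiset (α × α)} {p : α × α} (hp : p ∈ P) : p.2 ∈ entries P :=
  Multiset.mem_add.2 (Or.inr (Multiset.mem_map_of_mem _ hp))

lemma entries_eq_bind (P : Multiset (α × α)) : entries P = P.bind fun p => {p.1} + {p.2} := by
  rw [entries, Multiset.bind_add, Multiset.bind_singleton, Multiset.bind_singleton]

lemma bind_entries {β : Type*} (P : Multiset (α × α)) (g : α → Multiset β) :
    (entries P).bind g = P.bind fun p => g p.1 + g p.2 := by
  rw [entries, Multiset.add_bind, Multiset.bind_map, Multiset.bind_map, Multiset.bind_add]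

lemma countP_entries {P : Multiset (α × α)} (q : α → Prop) [DecidablePred q]
    (hP : ∀ p ∈ P, (q p.1 ↔ q p.2)) : (entries P).countP q = 2 * P.countP (q ·.1) := by
  rw [entries, Multiset.countP_add, Multiset.countP_map, Multiset.countP_map,
    ← Multiset.countP_eq_card_filter, ← Multiset.countP_eq_card_filter,
    Multiset.countP_congr rfl fun p hp => propext (hP p hp).symm, two_mul]

lemma countP_val_le_one [DecidableEq κ] {R : Finset α} {key : α → κ} (hR : Set.InjOn key R)
    (c : κ) : R.val.countP (key · = c) ≤ 1 := by
  rw [Multiset.countP_eq_card_filter, ← Finset.filter_val, Finset.card_val, Finset.card_le_one]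
  intro a ha b hb
  rw [Finset.mem_filter] at ha hb
  exact hR ha.1 hb.1 (ha.2.trans hb.2.symm)

lemma exists_entries_add_injOn (O : Finset α) (key : α → κ) :
    ∃ (P : Multiset (α × α)) (R : Finset α), entries P + R.val = O.val ∧
      (∀ p ∈ P, key p.1 = key p.2) ∧ Set.InjOn key R := by
  classical
  induction O using Finset.strongInduction with
  | H O ih =>
    by_cases hinj : Set.InjOn key O
    · exact ⟨0, O, by simp [entries], by simp, hinj⟩
    · obtain ⟨x, hx, y, hy, hkey, hxy⟩ : ∃ x ∈ O, ∃ y ∈ O, key x = key y ∧ x ≠ y := by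
        simpa [Set.InjOn] using hinj
      have hyx : y ∈ O.erase x := Finset.mem_erase.2 ⟨hxy.symm, hy⟩
      obtain ⟨P, R, hentries, hP, hR⟩ := ih ((O.erase x).erase y)
        ((Finset.erase_ssubset hyx).trans (Finset.erase_ssubset hx))
      refine ⟨(x, y) ::ₘ P, R, ?_, Multiset.forall_mem_cons.2 ⟨hkey, hP⟩, hR⟩
      rw [← Multiset.cons_erase (Finset.mem_def.1 hx), ← Finset.erase_val,
        ← Multiset.cons_erase (Finset.mem_def.1 hyx), ← Finset.erase_val, ← hentries]
      simp only [entries, Multiset.map_cons, Multiset.cons_add, Multiset.add_cons]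
      exact Multiset.cons_swap _ _ _

lemma lt_countP_of_pairwise_le [PartialOrder κ] [DecidableEq κ] {key : α → κ} {l : List α}
    (hl : l.Pairwise (key · ≤ key ·)) {i T : ℕ} (hi : i + T < l.length)
    (heq : key l[i] = key l[i + T]) : T < l.countP (key · = key l[i]) := by
  have hle : ∀ j k (hk : k < l.length) (hjk : j ≤ k), key l[j] ≤ key l[k] := fun j k hk hjk =>
    hjk.eq_or_lt.elim (fun h => by simp [h])
      fun h => List.pairwise_iff_getElem.1 hl j k _ _ h
  have hall : ∀ a ∈ (l.drop i).take (T + 1), key a = key l[i] := by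
    intro a ha
    obtain ⟨j, hj, rfl⟩ := List.mem_iff_getElem.1 ha
    rw [List.length_take, List.length_drop] at hj
    rw [List.getElem_take, List.getElem_drop]
    exact le_antisymm ((hle _ _ _ (by omega)).trans_eq heq.symm) (hle _ _ _ (by omega))
  have hsub : ((l.drop i).take (T + 1)).Sublist l :=
    (List.take_sublist _ _).trans (List.drop_sublist _ _)
  have hcount := hsub.countP_le (p := fun a => key a = key l[i])
  rw [List.countP_eq_length.2 (by simpa using hall), List.length_take, List.length_drop] at hcount
  omega

lemma exists_coe_eq_pairwise_le [LinearOrder κ] (key : α → κ) (s : Multiset α) :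
    ∃ l : List α, (l : Multiset α) = s ∧ l.Pairwise (key · ≤ key ·) := by
  have hsort := List.pairwise_mergeSort (le := fun a b => decide (key a ≤ key b))
    (fun a b c => by simpa using le_trans) (fun a b => by simpa using le_total _ _) s.toList
  exact ⟨_, (Multiset.coe_eq_coe.2 (List.mergeSort_perm _ _)).trans s.coe_toList,
    by simpa using hsort⟩

-- Sort `s` by `key` in any order, append `t`, and pair the `i`-th entry with the `(i + T)`-th.
lemma exists_entries_add_of_countP_le [DecidableEq κ] (key : α → κ) (s t : Multiset α) {T : ℕ}
    (hs : ∀ k, s.countP (key · = k) ≤ T) (hcard : s.card + t.card ≤ 2 * T) :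
    ∃ (P : Multiset (α × α)) (R : Multiset α), entries P + R = s + t ∧ P.card + R.card ≤ T ∧
      ∀ p ∈ P, key p.1 ≠ key p.2 ∨ p.2 ∈ t := by
  induction t using Quotient.inductionOn with | h t =>
  let _ : LinearOrder κ := by classical exact linearOrderOfSTO WellOrderingRel
  obtain ⟨l, rfl, hl⟩ := exists_coe_eq_pairwise_le key s
  simp only [Multiset.quot_mk_to_coe, Multiset.coe_card, Multiset.coe_add] at hcard ⊢
  set A := (l ++ t).take T
  set B := (l ++ t).drop T
  have hBA : B.length ≤ A.length := by
    simp only [A, B, List.length_take, List.length_drop, List.length_append]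
    omega
  have hA : A.length ≤ T := by simp [A]
  have hBA' : B.length ≤ (A.take B.length).length := by rw [List.length_take]; omega
  refine ⟨(A.take B.length).zip B, A.drop B.length, ?_, ?_, fun p hp => ?_⟩
  · rw [entries, Multiset.map_coe, Multiset.map_coe, List.map_fst_zip (by simp),
      List.map_snd_zip hBA', add_right_comm, Multiset.coe_add, Multiset.coe_add,
      List.take_append_drop, List.take_append_drop]
  · simp only [Multiset.coe_card, List.length_zip, List.length_take, List.length_drop]
    omega
  · obtain ⟨i, hi, rfl⟩ := List.mem_iff_getElem.1 hp
    have : i + T < (l ++ t).length := by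
      simp only [List.length_zip, B, List.length_drop] at hi
      omega
    simp only [List.getElem_zip, List.getElem_take, A, B, List.getElem_drop, add_comm T i]
    by_cases hil : i + T < l.length
    · left
      rw [List.getElem_append_left (by omega), List.getElem_append_left hil]
      intro heq
      have := hs (key l[i])
      have := lt_countP_of_pairwise_le hl hil heq
      rw [Multiset.coe_countP] at *
      omega
    · right
      rw [List.getElem_append_right (by omega)]
      exact List.getElem_mem _

lemma exists_bind_eq {β γ : Type*} {A : Multiset α} {p : β → Prop} {φ : β → Multiset γ}
    {ψ : α → Multiset γ} (h : ∀ a ∈ A, ∃ b, p b ∧ φ b = ψ a) :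
    ∃ B : Multiset β, (∀ b ∈ B, p b) ∧ B.card = A.card ∧ B.bind φ = A.bind ψ := by
  induction A using Multiset.induction_on with
  | empty => exact ⟨0, by simp⟩
  | cons a A ih =>
    obtain ⟨b, hb, hba⟩ := h a (Multiset.mem_cons_self a A)
    obtain ⟨B, hB, hcard, hbind⟩ := ih fun a ha => h a (Multiset.mem_cons_of_mem ha)
    exact ⟨b ::ₘ B, Multiset.forall_mem_cons.2 ⟨hb, hB⟩, by simp [hcard], by simp [hba, hbind]⟩

end Pairing

/-- `p` is a path in `D` with ends `x` and `y`, not both isolated. -/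
structure IsPathBetween (D : SimpleGraph V) (x y : V) (p : List V) : Prop where
  nodup : p.Nodup
  mem_edgeSet : ∀ e ∈ pathEdges p, e ∈ D.edgeSet
  ends : pathEnds p = {x} + {y}
  mem_support : ∀ v ∈ p, v ∈ D.support

namespace IsPathBetween

variable {D H : SimpleGraph V} {W : Finset V} {x x' y y' : V} {p q : List V}

lemma mono (hDH : D ≤ H) (h : IsPathBetween D x y p) : IsPathBetween H x y p where
  nodup := h.nodup
  mem_edgeSet e he := edgeSet_mono hDH (h.mem_edgeSet e he)
  ends := h.ends
  mem_support v hv := support_mono hDH (h.mem_support v hv)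

lemma of_adj (hxy : D.Adj x y) : IsPathBetween D x y [x, y] where
  nodup := by simpa using hxy.ne
  mem_edgeSet e he := by
    rw [pathEdges_cons_cons, pathEdges_singleton, List.mem_singleton] at he
    exact he ▸ hxy
  ends := rfl
  mem_support := by simpa using ⟨⟨y, hxy⟩, ⟨x, hxy.symm⟩⟩

lemma of_adj_of_adj {z : V} (hxz : D.Adj x z) (hzy : D.Adj z y) (hxy : x ≠ y) :
    IsPathBetween D x y [x, z, y] where
  nodup := by simpa using ⟨⟨hxz.ne, hxy⟩, hzy.ne⟩
  mem_edgeSet := by simpa using ⟨hxz, hzy⟩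
  ends := rfl
  mem_support := by simpa using ⟨⟨z, hxz⟩, ⟨x, hxz.symm⟩, ⟨z, hzy.symm⟩⟩

lemma ne_nil (h : IsPathBetween D x y p) : p ≠ [] := by
  rintro rfl
  simpa [pathEnds] using congrArg Multiset.card h.ends

lemma isPathPair_nil (h : IsPathBetween D x y p) (hW : D.support ⊆ W) :
    IsPathPair D W ([], p) where
  nodup := h.nodup
  mem v hv := hW (h.mem_support v hv)
  mem_edgeSet e he := h.mem_edgeSet e (by simpa [pairEdges] using he)
  snd_ne_nil := h.ne_nil

lemma isPathPair (hp : IsPathBetween D x x' p) (hq : IsPathBetween D y y' q)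
    (hpq : p.Disjoint q) (hW : D.support ⊆ W) : IsPathPair D W (p, q) where
  nodup := hp.nodup.append hq.nodup hpq
  mem v hv := hW ((List.mem_append.1 hv).elim (hp.mem_support v) (hq.mem_support v))
  mem_edgeSet e he := (Multiset.mem_add.1 he).elim (hp.mem_edgeSet e) (hq.mem_edgeSet e)
  snd_ne_nil := hq.ne_nil

end IsPathBetween

/-- `top` maps each component of `D` to one of its vertices, adjacent to all others in it. -/
structure IsTopMap (D : SimpleGraph V) (top : V → V) : Prop where
  eq_of_adj : ∀ ⦃x y⦄, D.Adj x y → top x = top y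
  eq_or_adj : ∀ x, top x = x ∨ D.Adj (top x) x

namespace IsTopMap

variable {D : SimpleGraph V} {W : Finset V} {top f : V → V} {x x' y y' : V}

lemma top_top (htop : IsTopMap D top) (x : V) : top (top x) = top x :=
  (htop.eq_or_adj x).elim (congrArg top) fun h => htop.eq_of_adj h

lemma exists_isPathBetween (htop : IsTopMap D top) (hxy : x ≠ y) (heq : top x = top y) :
    ∃ p, IsPathBetween D x y p ∧ ∀ v ∈ p, v = x ∨ v = y ∨ v = top x := by
  by_cases hadj : D.Adj x y
  · exact ⟨_, .of_adj hadj, by simp⟩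
  · have hx : D.Adj (top x) x := (htop.eq_or_adj x).resolve_left fun hx => by
      have := htop.eq_or_adj y
      grind
    have hy : D.Adj (top x) y := heq ▸ (htop.eq_or_adj y).resolve_left fun hy => by
      rw [heq, hy] at hx
      exact hadj hx.symm
    exact ⟨_, .of_adj_of_adj hx.symm hy hxy, by simp⟩

lemma exists_isPathPair_of_ne (htop : IsTopMap D top) (hW : D.support ⊆ W) (hxx' : x ≠ x')
    (hyy' : y ≠ y') (hx : top x = top x') (hy : top y = top y') (hne : top x ≠ top y) :
    ∃ g, IsPathPair D W g ∧ pairEnds g = {x} + {x'} + ({y} + {y'}) := by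
  obtain ⟨p, hp, hpx⟩ := htop.exists_isPathBetween hxx' hx
  obtain ⟨q, hq, hqy⟩ := htop.exists_isPathBetween hyy' hy
  have htopx := htop.top_top x
  have htopy := htop.top_top y
  have hdisj : p.Disjoint q := fun v hv hv' => by grind
  exact ⟨(p, q), hp.isPathPair hq hdisj hW, by rw [pairEnds, hp.ends, hq.ends]⟩

lemma top_apply (htop : IsTopMap D top) (hf : IsTopMap (restrict D {v | top v ≠ v}) f) (x : V) :
    top (f x) = top x :=
  (hf.eq_or_adj x).elim (congrArg top) fun h => htop.eq_of_adj (restrict_adj.1 h).1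

lemma exists_isPathPair_of_apply_eq (htop : IsTopMap D top)
    (hf : IsTopMap (restrict D {v | top v ≠ v}) f) (hW : D.support ⊆ W)
    (hnodup : [x, x', y, y'].Nodup) (hx : top x = top x') (hxt : top x ≠ x) (hyt : top y ≠ y)
    (hfx : f y = x) (hfy : f y = f y') :
    ∃ g, IsPathPair D W g ∧ pairEnds g = {x} + {x'} + ({y} + {y'}) := by
  simp only [List.nodup_cons, List.mem_cons, List.not_mem_nil, or_false, not_or] at hnodup
  have hxy : D.Adj x y := by
    have := (hf.eq_or_adj y).resolve_left (by rw [hfx]; exact hnodup.1.2.1)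
    exact hfx ▸ (restrict_adj.1 this).1
  have htopy : top x = top y := hfx ▸ htop.top_apply hf y
  have htopy' : top x' = top y' := by
    rw [← hx, ← htop.top_apply hf y', ← hfy, hfx]
  obtain ⟨p, hp, hpx⟩ := htop.exists_isPathBetween hnodup.2.1.2 htopy'
  have hdisj : [x, y].Disjoint p := fun v hv hv' => by
    have := hpx v hv'
    simp only [List.mem_cons, List.not_mem_nil, or_false] at hv
    grind
  refine ⟨_, (IsPathBetween.of_adj hxy).isPathPair hp hdisj hW, ?_⟩
  rw [pairEnds, hp.ends]
  exact add_add_add_comm _ _ _ _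

lemma exists_isPathPair_of_eq (htop : IsTopMap D top)
    (hf : IsTopMap (restrict D {v | top v ≠ v}) f) (hW : D.support ⊆ W)
    (hnodup : [x, x', y, y'].Nodup) (hx : top x = top x') (hyt : top y ≠ y) (hfy : f y = f y') :
    ∃ g, IsPathPair D W g ∧ pairEnds g = {x} + {x'} + ({y} + {y'}) := by
  have hnodup' := hnodup
  simp only [List.nodup_cons, List.mem_cons, List.not_mem_nil, or_false, not_or] at hnodup'
  obtain ⟨⟨hxx', hxy, hxy'⟩, ⟨hx'y, hx'y'⟩, hyy', -⟩ := hnodup'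
  obtain ⟨p, hp, hpx⟩ := htop.exists_isPathBetween hxx' hx
  obtain ⟨q, hq, hqy⟩ := hf.exists_isPathBetween hyy' hfy
  have hqtop : ∀ v ∈ q, top v ≠ v := fun v hv => by
    obtain ⟨w, hvw⟩ := hq.mem_support v hv
    exact (restrict_adj.1 hvw).2.1
  by_cases hxq : x ∈ q
  · exact htop.exists_isPathPair_of_apply_eq hf hW hnodup hx (hqtop x hxq) hyt
      (by have := hqy x hxq; tauto) hfy
  by_cases hx'q : x' ∈ q
  · simp only [add_comm ({x} : Multiset V) {x'}]
    exact htop.exists_isPathPair_of_apply_eq hf hW ((List.Perm.swap _ _ _).nodup_iff.1 hnodup)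
      hx.symm (hqtop x' hx'q) hyt (by have := hqy x' hx'q; tauto) hfy
  have htopx := htop.top_top x
  have hdisj : p.Disjoint q := fun v hv hv' => by
    have := hqtop v hv'
    grind
  exact ⟨(p, q), hp.isPathPair (hq.mono (restrict_le _ _)) hdisj hW,
    by rw [pairEnds, hp.ends, hq.ends]⟩

lemma even_ncard_odd [Finite V] (htop : IsTopMap D top) (c : V) :
    Even {v | top v = c ∧ Odd (D.neighborSet v).ncard}.ncard := by
  classical
  have := Fintype.ofFinite V
  have hnbr : ∀ v, (restrict D {v | top v = c}).neighborSet v =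
      if top v = c then D.neighborSet v else ∅ := fun v => by
    ext w
    have := htop.eq_of_adj (x := v) (y := w)
    split_ifs with hv
    · simp only [mem_neighborSet, restrict_adj, Set.mem_ofPred_eq]
      grind
    · simp [restrict_adj, hv]
  rw [Set.ncard_eq_toFinset_card']
  convert (restrict D {v | top v = c}).even_card_odd_degree_vertices using 2
  ext v
  rw [Set.mem_toFinset, Finset.mem_filter_univ, ← card_neighborSet_eq_degree,
    ← Nat.card_eq_fintype_card, Nat.card_coe_set_eq, hnbr]
  by_cases hv : top v = c <;> simp [hv]

lemma exists_isPathPair_bind_pairEnds_eq (htop : IsTopMap D top)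
    (hf : IsTopMap (restrict D {v | top v ≠ v}) f) (hW : D.support ⊆ W)
    {O : Finset V} {A : Multiset ((V × V) × V × V)} {B : Multiset (V × V)}
    (hAB : entries (entries A + B) = O.val) (htopAB : ∀ p ∈ entries A + B, top p.1 = top p.2)
    (hA : ∀ a ∈ A, top a.1.1 ≠ top a.2.1 ∨ top a.2.1 ≠ a.2.1 ∧ f a.2.1 = f a.2.2) :
    ∃ gs : Multiset (List V × List V), (∀ g ∈ gs, IsPathPair D W g) ∧
      gs.card = A.card + B.card ∧ gs.bind pairEnds = O.val := by
  rw [entries_eq_bind, Multiset.add_bind, bind_entries] at hAB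
  have hnodupA : ∀ a ∈ A, [a.1.1, a.1.2, a.2.1, a.2.2].Nodup := fun a ha => by
    have hle := (Multiset.le_bind A ha).trans ((Multiset.le_add_right _ _).trans_eq hAB)
    exact Multiset.coe_nodup.1 (Multiset.nodup_of_le hle O.nodup)
  have hneB : ∀ b ∈ B, b.1 ≠ b.2 := fun b hb => by
    have hle := (Multiset.le_bind B hb).trans ((Multiset.le_add_left _ _).trans_eq hAB)
    have hnodup : [b.1, b.2].Nodup := Multiset.coe_nodup.1 (Multiset.nodup_of_le hle O.nodup)
    simpa using hnodup
  obtain ⟨gA, hgA, hcardA, hendsA⟩ := exists_bind_eq (A := A) (p := IsPathPair D W)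
    (φ := pairEnds) (ψ := fun a => {a.1.1} + {a.1.2} + ({a.2.1} + {a.2.2})) fun a ha => by
    have h₁ := htopAB a.1 (Multiset.mem_add.2 (Or.inl (fst_mem_entries ha)))
    have h₂ := htopAB a.2 (Multiset.mem_add.2 (Or.inl (snd_mem_entries ha)))
    have hnodup := hnodupA a ha
    rcases hA a ha with hne | ⟨htop₂, hf₂⟩
    · exact htop.exists_isPathPair_of_ne hW (by grind) (by grind) h₁ h₂ hne
    · exact htop.exists_isPathPair_of_eq hf hW hnodup h₁ htop₂ hf₂
  obtain ⟨gB, hgB, hcardB, hendsB⟩ := exists_bind_eq (A := B) (p := IsPathPair D W)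
    (φ := pairEnds) (ψ := fun b => {b.1} + {b.2}) fun b hb => by
    obtain ⟨p, hp, -⟩ := htop.exists_isPathBetween (hneB b hb)
      (htopAB b (Multiset.mem_add.2 (Or.inr hb)))
    exact ⟨([], p), hp.isPathPair_nil hW, by rw [pairEnds, pathEnds, zero_add, hp.ends]⟩
  refine ⟨gA + gB, fun g hg => (Multiset.mem_add.1 hg).elim (hgA g) (hgB g), ?_, ?_⟩
  · rw [Multiset.card_add, hcardA, hcardB]
  · rw [Multiset.add_bind, hendsA, hendsB, hAB]

variable [Finite V] {c : V} {K : Finset V}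

lemma sum_ncard_neighborSet_lt (htop : IsTopMap D top)
    (hf : IsTopMap (restrict D {v | top v ≠ v}) f) (hW : D.support ⊆ W) (hK : K.Nonempty)
    (hc : ∀ r ∈ K, top r = c) (htopK : ∀ r ∈ K, top r ≠ r) (hinj : Set.InjOn f K) :
    ∑ r ∈ K, (D.neighborSet r).ncard < W.card := by
  classical
  have hadj : ∀ r ∈ K, D.Adj c r := fun r hr =>
    hc r hr ▸ (htop.eq_or_adj r).resolve_left (htopK r hr)
  have hmem : ∀ x y, D.Adj x y → x ∈ W := fun x y hxy => hW ⟨y, hxy⟩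
  have hcW : c ∈ W := hK.elim fun r hr => hmem c r (hadj r hr)
  refine lt_of_le_of_lt ?_ (Finset.card_erase_lt_of_mem hcW)
  calc ∑ r ∈ K, (D.neighborSet r).ncard
      ≤ ∑ r ∈ K, ((W.erase c).filter (f · = f r)).card := Finset.sum_le_sum fun r hr => ?_
    _ = ∑ b ∈ K.image f, ((W.erase c).filter (f · = b)).card :=
        (Finset.sum_image (f := fun b => ((W.erase c).filter (f · = b)).card) hinj).symm
    _ ≤ (W.erase c).card :=
        (Finset.sum_card_fiberwise_eq_card_filter _ _ _).trans_le (Finset.card_filter_le _ _)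
  rw [← Set.ncard_exchange (D.notMem_neighborSet_self) (hadj r hr).symm,
    ← Set.ncard_coe_finset]
  refine Set.ncard_le_ncard (fun z hz => ?_) (Set.toFinite _)
  rw [Finset.mem_coe, Finset.mem_filter, Finset.mem_erase]
  rcases hz with rfl | ⟨hrz, hzc⟩
  · exact ⟨⟨(hadj z hr).ne', hmem z c (hadj z hr).symm⟩, rfl⟩
  · have hrz : D.Adj r z := hrz
    have htopz : top z ≠ z := by
      rw [← htop.eq_of_adj hrz, hc r hr]
      exact fun h => hzc h.symm
    exact ⟨⟨hzc, hmem z r hrz.symm⟩,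
      (hf.eq_of_adj (restrict_adj.2 ⟨hrz, htopK r hr, htopz⟩)).symm⟩

lemma card_le_of_ncard_leaves_le (htop : IsTopMap D top)
    (hf : IsTopMap (restrict D {v | top v ≠ v}) f) (hW : D.support ⊆ W) (hK : K.Nonempty)
    (hc : ∀ r ∈ K, top r = c) (htopK : ∀ r ∈ K, top r ≠ r) (hinj : Set.InjOn f K)
    (hodd : ∀ r ∈ K, Odd (D.neighborSet r).ncard)
    (hleaf : {x | D.neighborSet x = {c}}.ncard ≤ 2) :
    K.card + 1 ≤ W.card ∧ 3 * K.card ≤ W.card + 3 := by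
  classical
  have hsum := htop.sum_ncard_neighborSet_lt hf hW hK hc htopK hinj
  have hcard : K.card ≤ ∑ r ∈ K, (D.neighborSet r).ncard := by
    rw [Finset.card_eq_sum_ones]
    exact Finset.sum_le_sum fun r hr => (hodd r hr).pos
  have hleafK : (K.filter fun r => (D.neighborSet r).ncard = 1).card ≤ 2 := by
    refine le_trans ?_ hleaf
    rw [← Set.ncard_coe_finset]
    refine Set.ncard_le_ncard (fun r hr => ?_) (Set.toFinite _)
    obtain ⟨hr, hr₁⟩ := Finset.mem_filter.1 hr
    obtain ⟨a, ha⟩ := Set.ncard_eq_one.1 hr₁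
    have hcr : c ∈ D.neighborSet r :=
      ((hc r hr ▸ (htop.eq_or_adj r).resolve_left (htopK r hr) : D.Adj c r)).symm
    rw [Set.mem_ofPred_eq, ha]
    rw [ha, Set.mem_singleton_iff] at hcr
    rw [hcr]
  have hthree : 3 * K.card ≤ ∑ r ∈ K, (D.neighborSet r).ncard +
      2 * (K.filter fun r => (D.neighborSet r).ncard = 1).card := by
    rw [Finset.card_eq_sum_ones, Finset.card_filter, Finset.mul_sum, Finset.mul_sum,
      ← Finset.sum_add_distrib]
    refine Finset.sum_le_sum fun r hr => ?_
    obtain ⟨k, hk⟩ := hodd r hr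
    split_ifs <;> omega
  omega

variable [DecidableEq V] {O : Finset V}

lemma even_countP_odd (htop : IsTopMap D top) (hO : ∀ v, v ∈ O ↔ Odd (D.neighborSet v).ncard)
    (c : V) : Even (O.val.countP (top · = c)) := by
  rw [Multiset.countP_eq_card_filter, ← Finset.filter_val, Finset.card_val,
    ← Set.ncard_coe_finset]
  convert htop.even_ncard_odd c using 2
  ext v
  rw [Finset.mem_coe, Finset.mem_filter, hO, and_comm]
  rfl

-- First pair up vertices with equal `f`, then the remaining ones, of which there are an even number
-- in each component, with equal `top`.
lemma exists_entries_eq_add (htop : IsTopMap D top)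
    (hf : IsTopMap (restrict D {v | top v ≠ v}) f)
    (hO : ∀ v, v ∈ O ↔ Odd (D.neighborSet v).ncard) :
    ∃ (P Q : Multiset (V × V)) (R : Finset V),
      entries Q + R.val = (O.filter fun v => top v ≠ v).val ∧
      entries P = R.val + (O.filter fun v => top v = v).val ∧
      (∀ p ∈ P, top p.1 = top p.2) ∧ (∀ p ∈ Q, f p.1 = f p.2) ∧ Set.InjOn f R := by
  obtain ⟨Q, R, hQR, hQ, hR⟩ := exists_entries_add_injOn (O.filter fun v => top v ≠ v) f
  have hdisj : Disjoint R (O.filter fun v => top v = v) := by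
    refine Finset.disjoint_left.2 fun r hr hr' => ?_
    have hr'' : r ∈ O.filter fun v => top v ≠ v := by
      rw [Finset.mem_def, ← hQR]
      exact Multiset.mem_add.2 (Or.inr hr)
    exact (Finset.mem_filter.1 hr'').2 (Finset.mem_filter.1 hr').2
  obtain ⟨P, S, hPS, hP, hS⟩ := exists_entries_add_injOn (R.disjUnion _ hdisj) top
  rw [Finset.disjUnion_val] at hPS
  have htopQ : ∀ p ∈ Q, top p.1 = top p.2 := fun p hp => by
    rw [← htop.top_apply hf, hQ p hp, htop.top_apply hf]
  have htotal : entries P + S.val + entries Q = O.val := by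
    rw [hPS, add_right_comm, add_comm R.val, hQR, Finset.filter_val, Finset.filter_val, add_comm,
      Multiset.filter_add_not]
  have hS₀ : S = ∅ := Finset.eq_empty_of_forall_notMem fun s hs => by
    have heven := htop.even_countP_odd hO (top s)
    rw [← htotal, Multiset.countP_add, Multiset.countP_add,
      countP_entries (top · = top s) fun p hp => by rw [hP p hp],
      countP_entries (top · = top s) fun p hp => by rw [htopQ p hp]] at heven
    have hle := countP_val_le_one hS (top s)
    have hpos : 0 < S.val.countP (top · = top s) := Multiset.countP_pos.2 ⟨s, hs, rfl⟩
    grind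
  exact ⟨P, Q, R, hQR, by rw [← hPS, hS₀, Finset.empty_val, add_zero], hP, hQ, hR⟩

lemma exists_entries_add_entries_eq (htop : IsTopMap D top)
    (hf : IsTopMap (restrict D {v | top v ≠ v}) f) (hW : D.support ⊆ W)
    (hleaf : ∀ c, {x | D.neighborSet x = {c}}.ncard ≤ 2)
    (hO : ∀ v, v ∈ O ↔ Odd (D.neighborSet v).ncard) :
    ∃ P Q : Multiset (V × V), entries P + entries Q = O.val ∧ (∀ p ∈ P, top p.1 = top p.2) ∧
      (∀ p ∈ Q, top p.1 ≠ p.1 ∧ f p.1 = f p.2) ∧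
      ∀ c, 4 * P.countP (top ·.1 = c) ≤ W.card + 2 := by
  obtain ⟨P, Q, R, hQR, hPR, hP, hQ, hR⟩ := htop.exists_entries_eq_add hf hO
  have hmem : ∀ v ∈ entries Q + R.val, v ∈ O ∧ top v ≠ v := fun v hv => by
    simpa [hQR] using hv
  have hmemR : ∀ r ∈ R, r ∈ O ∧ top r ≠ r := fun r hr => hmem r (Multiset.mem_add.2 (Or.inr hr))
  refine ⟨P, Q, ?_, hP, fun p hp => ⟨(hmem p.1 ?_).2, hQ p hp⟩, fun c => ?_⟩
  · rw [hPR, add_right_comm, add_comm R.val, hQR, Finset.filter_val, Finset.filter_val, add_comm,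
      Multiset.filter_add_not]
  · exact Multiset.mem_add.2 (Or.inl (fst_mem_entries hp))
  have hcount := countP_entries (top · = c) fun p hp => by rw [hP p hp]
  have hfix : Set.InjOn top (O.filter fun v => top v = v) := fun a ha b hb hab => by
    rw [Finset.mem_coe, Finset.mem_filter] at ha hb
    rw [← ha.2, hab, hb.2]
  have hle := countP_val_le_one hfix c
  rw [hPR, Multiset.countP_add, Multiset.countP_eq_card_filter, ← Finset.filter_val,
    Finset.card_val] at hcount
  rcases (R.filter fun v => top v = c).eq_empty_or_nonempty with hempty | hne
  · rw [hempty, Finset.card_empty] at hcount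
    omega
  · have := htop.card_le_of_ncard_leaves_le hf hW hne (fun r hr => (Finset.mem_filter.1 hr).2)
      (fun r hr => (hmemR r (Finset.mem_filter.1 hr).1).2)
      (hR.mono (Finset.coe_subset.2 (Finset.filter_subset _ _)))
      (fun r hr => (hO r).1 (hmemR r (Finset.mem_filter.1 hr).1).1) (hleaf c)
    omega

theorem exists_isPathPair (htop : IsTopMap D top)
    (hf : IsTopMap (restrict D {v | top v ≠ v}) f) (hW : D.support ⊆ W)
    (hleaf : ∀ c, {x | D.neighborSet x = {c}}.ncard ≤ 2) :
    ∃ gs : Multiset (List V × List V), (∀ g ∈ gs, IsPathPair D W g) ∧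
      (∀ v, (gs.bind pairEnds).count v = (D.neighborSet v).ncard % 2) ∧
      4 * gs.card ≤ W.card + 2 := by
  classical
  obtain ⟨O, hO⟩ : ∃ O : Finset V, ∀ v, v ∈ O ↔ Odd (D.neighborSet v).ncard :=
    ⟨(Set.toFinite {v | Odd (D.neighborSet v).ncard}).toFinset, by simp⟩
  have hOW : O ⊆ W := fun v hv => by
    obtain ⟨w, hw⟩ := Set.nonempty_of_ncard_ne_zero ((hO v).1 hv).pos.ne'
    exact hW ⟨w, hw⟩
  obtain ⟨P, Q, hPQ, hP, hQ, hclass⟩ := htop.exists_entries_add_entries_eq hf hW hleaf hO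
  have hcard : P.card + Q.card ≤ 2 * ((W.card + 2) / 4) := by
    have h₁ := congrArg Multiset.card hPQ
    rw [Multiset.card_add, card_entries, card_entries, Finset.card_val] at h₁
    have h₂ := Finset.card_le_card hOW
    omega
  obtain ⟨A, B, hAB, hcardAB, hA⟩ := exists_entries_add_of_countP_le (fun p : V × V => top p.1) P Q
    (fun c => (Nat.le_div_iff_mul_le four_pos).2 (by rw [mul_comm]; exact hclass c)) hcard
  have htopPQ : ∀ p ∈ P + Q, top p.1 = top p.2 := fun p hp => by
    rcases Multiset.mem_add.1 hp with hp | hp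
    · exact hP p hp
    · rw [← htop.top_apply hf, (hQ p hp).2, htop.top_apply hf]
  obtain ⟨gs, hgs, hcardgs, hends⟩ := htop.exists_isPathPair_bind_pairEnds_eq hf hW (O := O)
    (A := A) (B := B) (by rw [hAB, ← hPQ]; simp only [entries, Multiset.map_add]; abel)
    (by rwa [hAB]) fun a ha => (hA a ha).imp_right fun ha => hQ _ ha
  refine ⟨gs, hgs, fun v => ?_, by omega⟩
  rw [hends, Multiset.count_eq_of_nodup O.nodup]
  simp only [Finset.mem_val, hO]
  split_ifs with hv
  · exact (Nat.odd_iff.1 hv).symm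
  · exact (Nat.even_iff.1 (Nat.not_odd_iff_even.1 hv)).symm

end IsTopMap

/-! ### Three leaves with the same neighbour -/

namespace IsDominatingPair

variable {G : SimpleGraph V} {b₁ b₂ c x y z : V} {W : Finset V} (h : IsDominatingPair G b₁ b₂ W)

include h

lemma card_add_two_le [Finite V] : W.card + 2 ≤ G.support.ncard := by
  classical
  have hb₁ : b₁ ∉ insert b₂ W := by simp [h.adj.ne, h.notMem_left]
  have hcard : (insert b₁ (insert b₂ W)).card = W.card + 2 := by
    rw [Finset.card_insert_of_notMem hb₁, Finset.card_insert_of_notMem h.notMem_right]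
  rw [← hcard, ← Set.ncard_coe_finset]
  refine Set.ncard_le_ncard (fun v hv => ?_) (Set.toFinite _)
  simp only [Finset.coe_insert, Set.mem_insert_iff, Finset.mem_coe] at hv
  rcases hv with rfl | rfl | hv
  exacts [⟨b₂, h.adj⟩, ⟨b₁, h.adj.symm⟩, ⟨b₁, (h.adj_left v hv).symm⟩]

lemma bridgeless_restrict {s : Set V} (hb₁ : b₁ ∈ s) (hb₂ : b₂ ∈ s) (hcW : c ∈ W) (hc : c ∈ s) :
    Bridgeless (restrict G s) := fun u v huv => by
  obtain ⟨hadj, hu, hv⟩ := restrict_adj.1 huv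
  obtain ⟨t, ht, hut, hvt⟩ : ∃ t ∈ s, G.Adj u t ∧ G.Adj v t := by
    rcases h.eq_or_mem hadj with rfl | rfl | huW <;>
      rcases h.eq_or_mem hadj.symm with rfl | rfl | hvW
    · exact absurd rfl hadj.ne
    · exact ⟨c, hc, h.adj_left c hcW, h.adj_right c hcW⟩
    · exact ⟨b₂, hb₂, h.adj, (h.adj_right v hvW).symm⟩
    · exact ⟨c, hc, h.adj_right c hcW, h.adj_left c hcW⟩
    · exact absurd rfl hadj.ne
    · exact ⟨b₁, hb₁, h.adj.symm, (h.adj_left v hvW).symm⟩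
    · exact ⟨b₂, hb₂, (h.adj_right u huW).symm, h.adj⟩
    · exact ⟨b₁, hb₁, (h.adj_left u huW).symm, h.adj.symm⟩
    · exact ⟨b₁, hb₁, (h.adj_left u huW).symm, (h.adj_left v hvW).symm⟩
  exact not_isBridge_of_triangle (restrict_adj.2 ⟨hut, hu, ht⟩) (restrict_adj.2 ⟨hvt, hv, ht⟩)
    hadj.ne

lemma isCycleList_hexagon (hnodup : [x, y, c, z].Nodup) (hmem : ∀ v ∈ [x, y, c, z], v ∈ W)
    (hyc : G.Adj y c) (hcz : G.Adj c z) : IsCycleList G [b₁, x, b₂, y, c, z] where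
  nodup := by
    have := h.adj.ne
    have := h.notMem_left
    have := h.notMem_right
    grind
  three_le_length := by simp
  mem_edgeSet e he := by
    have hx : x ∈ W := hmem x (by simp)
    have hy : y ∈ W := hmem y (by simp)
    have hz : z ∈ W := hmem z (by simp)
    simp only [cycleEdges_cons, List.cons_append, List.nil_append, pathEdges_cons_cons,
      pathEdges_singleton, List.mem_cons, List.not_mem_nil, or_false] at he
    rcases he with rfl | rfl | rfl | rfl | rfl | rfl
    exacts [h.adj_left x hx, (h.adj_right x hx).symm, h.adj_right y hy, hyc, hcz,
      (h.adj_left z hz).symm]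

lemma eq_or_eq_or_eq_of_adj_leaf (hx : (restrict G W).neighborSet x = {c}) (hxy : G.Adj x y) :
    y = b₁ ∨ y = b₂ ∨ y = c := by
  have hxc : (restrict G W).Adj x c := hx.ge rfl
  exact (h.eq_or_mem hxy.symm).imp_right fun hy => hy.imp_right fun hyW =>
    hx.le (restrict_adj.2 ⟨hxy, (restrict_adj.1 hxc).2.1, hyW⟩)

/-- Removing the three leaves leaves a bridgeless graph, and two hexagons through `b₁`, `b₂` and
`c` cover all edges at the leaves. -/
lemma hasSmallCover_of_leaves [Finite V]
    (ih : ∀ H : SimpleGraph V, Bridgeless H → H.support.ncard < G.support.ncard → HasSmallCover H)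
    (hxy : x ≠ y) (hxz : x ≠ z) (hyz : y ≠ z) (hx : (restrict G W).neighborSet x = {c})
    (hy : (restrict G W).neighborSet y = {c}) (hz : (restrict G W).neighborSet z = {c}) :
    HasSmallCover G := by
  have hleaf : ∀ v ∈ ({x, y, z} : Set V), (restrict G W).neighborSet v = {c} := by
    rintro v (rfl | rfl | rfl) <;> assumption
  have hadj : ∀ v ∈ ({x, y, z} : Set V), G.Adj v c ∧ v ∈ W ∧ c ∈ W := fun v hv =>
    restrict_adj.1 ((hleaf v hv).ge rfl)
  obtain ⟨⟨hxc, hxW, hcW⟩, ⟨hyc, hyW, -⟩, hzc, hzW, -⟩ :=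
    And.intro (hadj x (by simp)) (And.intro (hadj y (by simp)) (hadj z (by simp)))
  have hb₁ : b₁ ∈ ({x, y, z} : Set V)ᶜ := fun hv => h.notMem_left (hadj _ hv).2.1
  have hb₂ : b₂ ∈ ({x, y, z} : Set V)ᶜ := fun hv => h.notMem_right (hadj _ hv).2.1
  have hncard : (restrict G {x, y, z}ᶜ).support.ncard + 3 ≤ G.support.ncard := by
    rw [← Set.ncard_eq_three.2 ⟨x, y, z, hxy, hxz, hyz, rfl⟩]
    exact ncard_support_restrict_compl_add_le fun v hv => ⟨c, (hadj v hv).1⟩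
  obtain ⟨L, hL, hlen⟩ := ih _ (h.bridgeless_restrict hb₁ hb₂ hcW fun hc => (hadj c hc).1.ne rfl)
    (by omega)
  have htwo := two_le_ncard_support (restrict_adj.2 ⟨h.adj, hb₁, hb₂⟩)
  have := hxc.ne
  have := hyc.ne
  have := hzc.ne
  refine ⟨[b₁, x, b₂, y, c, z] :: [b₁, y, b₂, z, c, x] :: L, ⟨?_, ?_⟩, by grind⟩
  · simp only [List.forall_mem_cons]
    exact ⟨h.isCycleList_hexagon (by grind) (by grind) hyc hzc.symm,
      h.isCycleList_hexagon (by grind) (by grind) hzc hxc.symm,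
      fun d hd => (hL.isCycleList d hd).mono (restrict_le _ _)⟩
  have hcov : ∀ u v, G.Adj u v → u ∈ ({x, y, z} : Set V) →
      Covers ([b₁, x, b₂, y, c, z] :: [b₁, y, b₂, z, c, x] :: L) s(u, v) := fun u v huv hu => by
    have hv := h.eq_or_eq_or_eq_of_adj_leaf (hleaf u hu) huv
    simp only [covers_cons, cycleEdges_cons, List.cons_append, List.nil_append,
      pathEdges_cons_cons, pathEdges_singleton, List.mem_cons, List.not_mem_nil, or_false]
    rcases hu with rfl | rfl | rfl <;> rcases hv with rfl | rfl | rfl <;> simp [Sym2.eq_swap]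
  intro u v huv
  by_cases hu : u ∈ ({x, y, z} : Set V)
  · exact hcov u v huv hu
  by_cases hv : v ∈ ({x, y, z} : Set V)
  · exact Sym2.eq_swap ▸ hcov v u huv.symm hv
  exact covers_cons.2 (Or.inr (covers_cons.2 (Or.inr (hL.covers (restrict_adj.2 ⟨huv, hu, hv⟩)))))

end IsDominatingPair

/-! ### Nested neighbourhoods -/

/-- For adjacent vertices of `D`, the one of larger rank `ρ` is adjacent to all other neighbours of
the other one. -/
def IsNested {α : Type*} [LT α] (ρ : V → α) (D : SimpleGraph V) : Prop :=
  ∀ ⦃a b x⦄, D.Adj a b → ρ a < ρ b → D.Adj a x → x ≠ b → D.Adj b x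

lemma IsNested.restrict {α : Type*} [LT α] {ρ : V → α} {D : SimpleGraph V} (hD : IsNested ρ D)
    (s : Set V) : IsNested ρ (restrict D s) := fun a b x hab hρ hax hxb => by
  rw [restrict_adj] at *
  exact ⟨hD hab.1 hρ hax.1 hxb, hab.2.2, hax.2.2⟩

section TopMap

variable {α : Type*} [LinearOrder α] {ρ : V → α} {D : SimpleGraph V}

lemma IsNested.eq_or_adj_of_walk (hD : IsNested ρ D) (hρ : Function.Injective ρ) {t u v : V}
    (p : D.Walk u v) (hmax : ∀ w, D.Reachable u w → ρ w ≤ ρ t) (hu : t = u ∨ D.Adj t u) :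
    t = v ∨ D.Adj t v := by
  induction p with
  | nil => exact hu
  | @cons u w _ huw _ ih =>
    refine ih (fun x hx => hmax x (huw.reachable.trans hx)) ?_
    rcases hu with rfl | hu
    · exact Or.inr huw
    · refine or_iff_not_imp_left.2 fun hw => hD hu.symm ?_ huw (Ne.symm hw)
      exact (hmax u (Reachable.refl u)).lt_of_ne (hρ.ne hu.ne')

/-- The vertex of largest rank in a component is adjacent to all others. -/
lemma IsNested.exists_isTopMap [Finite V] (hD : IsNested ρ D) (hρ : Function.Injective ρ) :
    ∃ top, IsTopMap D top := by
  have hmax : ∀ x, ∃ t, D.Reachable x t ∧ ∀ w, D.Reachable x w → ρ w ≤ ρ t := fun x =>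
    Set.exists_max_image {w | D.Reachable x w} ρ (Set.toFinite _) ⟨x, Reachable.refl x⟩
  choose top hreach hmax using hmax
  refine ⟨top, fun x y hxy => hρ (le_antisymm ?_ ?_), fun x => ?_⟩
  · exact hmax y _ (hxy.symm.reachable.trans (hreach x))
  · exact hmax x _ (hxy.reachable.trans (hreach y))
  · obtain ⟨p⟩ := (hreach x).symm
    exact hD.eq_or_adj_of_walk hρ p (fun w hw => hmax x w ((hreach x).trans hw)) (Or.inl rfl)

end TopMap

theorem IsDominatingPair.hasSmallCover [Finite V] {G : SimpleGraph V} {b₁ b₂ : V} {W : Finset V}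
    {α : Type*} [LinearOrder α] {ρ : V → α} (h : IsDominatingPair G b₁ b₂ W)
    (ih : ∀ H : SimpleGraph V, Bridgeless H → H.support.ncard < G.support.ncard → HasSmallCover H)
    (hρ : Function.Injective ρ) (hW : IsNested ρ (restrict G W)) : HasSmallCover G := by
  classical
  by_cases hleaf : ∀ c, {x | (restrict G W).neighborSet x = {c}}.ncard ≤ 2
  · obtain ⟨top, htop⟩ := hW.exists_isTopMap hρ
    obtain ⟨f, hf⟩ := (hW.restrict {v | top v ≠ v}).exists_isTopMap hρ
    have hsupp : (restrict G W).support ⊆ W := by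
      rintro x ⟨y, hxy : (restrict G W).Adj x y⟩
      exact (restrict_adj.1 hxy).2.1
    obtain ⟨gs, hgs, hends, hcard⟩ := htop.exists_isPathPair hf hsupp hleaf
    obtain ⟨L, hL, hlen⟩ := h.exists_isCycleCover_of_four_mul_card_le hgs hends hcard
    exact ⟨L, hL, by have := h.card_add_two_le; omega⟩
  · push Not at hleaf
    obtain ⟨c, hc⟩ := hleaf
    obtain ⟨x, y, z, hx, hy, hz, hxy, hxz, hyz⟩ := (Set.two_lt_ncard_iff (Set.toFinite _)).1 hc
    exact h.hasSmallCover_of_leaves ih hxy hxz hyz hx hy hz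

/-! ### Graphs with triangles -/

/-- The vertices that form a triangle of `G` with `b` and some third vertex. -/
def triangleNeighbors (G : SimpleGraph V) (b : V) : Set V :=
  {c | G.Adj b c ∧ ∃ z, G.Adj b z ∧ G.Adj c z}

/-- For adjacent vertices of `G` with a common neighbour, the one of larger rank `ρ` is adjacent to
all other neighbours of the other one. Equivalently, no Kelmans shift along an edge of a triangle
towards the vertex of larger rank changes `G`. -/
def IsTriangleNested {α : Type*} [LT α] (ρ : V → α) (G : SimpleGraph V) : Prop :=
  ∀ ⦃a b z x⦄, G.Adj a b → ρ a < ρ b → G.Adj a z → G.Adj b z → G.Adj a x → x ≠ b → G.Adj b x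

variable {G : SimpleGraph V} {b₁ b₂ : V}

lemma IsTriangleNested.isNested_restrict {α : Type*} [LT α] {ρ : V → α}
    (hN : IsTriangleNested ρ G) {s : Set V} (hs : ∀ w ∈ s, G.Adj b₁ w) :
    IsNested ρ (restrict G s) := fun a b x hab hρ hax hxb => by
  rw [restrict_adj] at *
  exact ⟨hN hab.1 hρ (hs a hab.2.1).symm (hs b hab.2.2).symm hax.1 hxb, hab.2.2, hax.2.2⟩

section Max

variable {α : Type*} [LinearOrder α] {ρ : V → α} (hN : IsTriangleNested ρ G)
  (hρ : Function.Injective ρ) (hmax₁ : ∀ v, (triangleNeighbors G v).Nonempty → ρ v ≤ ρ b₁)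

include hN hρ hmax₁

lemma mem_triangleNeighbors_or_eq {x y : V} (hxy : G.Adj x y) (hx : x ∈ triangleNeighbors G b₁) :
    y ∈ triangleNeighbors G b₁ ∨ y = b₁ := by
  refine or_iff_not_imp_right.2 fun hy => ?_
  obtain ⟨hbx, z, hbz, hxz⟩ := hx
  have hlt : ρ x < ρ b₁ := (hmax₁ x ⟨z, hxz, b₁, hbx.symm, hbz.symm⟩).lt_of_ne (hρ.ne hbx.ne')
  exact ⟨hN hbx.symm hlt hxz hbz hxy hy, x, hbx, hxy.symm⟩

variable (hb₂ : b₂ ∈ triangleNeighbors G b₁)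

include hb₂

lemma isDominatingPair_of_triangleNeighbors {W : Finset V}
    (hW : ∀ v, v ∈ W ↔ v ∈ triangleNeighbors G b₁ ∧ v ≠ b₂)
    (hout : ∀ x y, G.Adj x y → x ∉ triangleNeighbors G b₁ → y ∈ triangleNeighbors G b₁)
    (hdom : triangleNeighbors G b₁ ⊆ insert b₂ (G.neighborSet b₂ \ {b₁})) :
    IsDominatingPair G b₁ b₂ W where
  adj := hb₂.1
  adj_left w hw := ((hW w).1 hw).1.1
  adj_right w hw := ((hdom ((hW w).1 hw).1).resolve_left ((hW w).1 hw).2).1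
  eq_or_mem x y hxy := by
    by_cases hx : x ∈ triangleNeighbors G b₁
    · exact Or.inr ((em (x = b₂)).imp_right fun hx₂ => (hW x).2 ⟨hx, hx₂⟩)
    · exact Or.inl ((mem_triangleNeighbors_or_eq hN hρ hmax₁ hxy.symm
        (hout x y hxy hx)).resolve_left hx)
  nonempty := by
    obtain ⟨hb, z, hbz, hb₂z⟩ := hb₂
    exact ⟨z, (hW z).2 ⟨⟨hbz, b₂, hb, hb₂z.symm⟩, hb₂z.ne'⟩⟩

variable (hmax₂ : ∀ v ∈ triangleNeighbors G b₁, ρ v ≤ ρ b₂)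

include hmax₂

lemma mem_insert_neighborSet_or_eq {x y : V} (hxy : G.Adj x y)
    (hx : x ∈ insert b₂ (G.neighborSet b₂ \ {b₁})) :
    y ∈ insert b₂ (G.neighborSet b₂ \ {b₁}) ∨ y = b₁ := by
  refine or_iff_not_imp_right.2 fun hy => or_iff_not_imp_left.2 fun hy₂ => ⟨?_, hy⟩
  rcases hx with rfl | ⟨hbx, hx₁⟩
  · exact hxy
  · have hx := (mem_triangleNeighbors_or_eq hN hρ hmax₁ hbx hb₂).resolve_right hx₁
    exact hN hbx.symm ((hmax₂ x hx).lt_of_ne (hρ.ne (G.ne_of_adj hbx).symm)) hx.1.symm hb₂.1.symm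
      hxy hy₂

end Max

/-- If `b₁` is the vertex of largest rank in a triangle and `b₂` its triangle neighbour of largest
rank, then `b₁` is a cut vertex or `b₁` and `b₂` dominate the graph. -/
lemma HasSmallCover.of_triangle [Finite V] {α : Type*} [LinearOrder α] {ρ : V → α}
    (hG : Bridgeless G)
    (ih : ∀ H : SimpleGraph V, Bridgeless H → H.support.ncard < G.support.ncard → HasSmallCover H)
    (hρ : Function.Injective ρ) (hN : IsTriangleNested ρ G) {x y z : V} (hxy : G.Adj x y)
    (hyz : G.Adj y z) (hxz : G.Adj x z) : HasSmallCover G := by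
  classical
  obtain ⟨b₁, hb₁, hmax₁⟩ := Set.exists_max_image {v | (triangleNeighbors G v).Nonempty} ρ
    (Set.toFinite _) ⟨x, y, hxy, z, hxz, hyz⟩
  obtain ⟨b₂, hb₂, hmax₂⟩ := Set.exists_max_image (triangleNeighbors G b₁) ρ (Set.toFinite _) hb₁
  by_cases hout : ∃ u v, G.Adj u v ∧ u ∉ triangleNeighbors G b₁ ∧ v ∉ triangleNeighbors G b₁
  · exact .of_cutVertex hG ih (fun u v => mem_triangleNeighbors_or_eq hN hρ hmax₁)
      ⟨b₂, b₁, hb₂.1.symm, hb₂⟩ hout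
  by_cases hdom : triangleNeighbors G b₁ ⊆ insert b₂ (G.neighborSet b₂ \ {b₁})
  · push Not at hout
    have h := isDominatingPair_of_triangleNeighbors hN hρ hmax₁ hb₂
      (W := (Set.toFinite (triangleNeighbors G b₁ \ {b₂})).toFinset) (by simp) hout hdom
    exact h.hasSmallCover ih hρ (hN.isNested_restrict h.adj_left)
  · obtain ⟨a, ha, ha₂⟩ := Set.not_subset.1 hdom
    refine .of_cutVertex hG ih
      (fun u v => mem_insert_neighborSet_or_eq hN hρ hmax₁ hb₂ hmax₂)
      ⟨b₂, b₁, hb₂.1.symm, Or.inl rfl⟩ ⟨b₁, a, ha.1, ?_, ha₂⟩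
    rintro (h | h)
    exacts [hb₂.1.ne h, h.2 rfl]

/-! ### Fan's bound -/

lemma Bridgeless.hasSmallCover_of_forall_lt [Finite V] {ρ : V → ℕ} (hG : Bridgeless G)
    (ih : ∀ H : SimpleGraph V, Bridgeless H → H.support.ncard < G.support.ncard → HasSmallCover H)
    (hρ : Function.Injective ρ) (hN : IsTriangleNested ρ G) : HasSmallCover G := by
  by_cases htri : ∃ x y z, G.Adj x y ∧ G.Adj y z ∧ G.Adj x z
  · obtain ⟨x, y, z, hxy, hyz, hxz⟩ := htri
    exact .of_triangle hG ih hρ hN hxy hyz hxz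
  push Not at htri
  by_cases hfour : ∃ a b c d, G.Adj a b ∧ G.Adj b c ∧ G.Adj c d ∧ G.Adj d a ∧ a ≠ c ∧ b ≠ d
  · obtain ⟨a, b, c, d, hab, hbc, hcd, hda, hac, hbd⟩ := hfour
    exact .of_fourCycle hG ih htri hab hbc hcd hda hac hbd
  push Not at hfour
  by_cases hedge : ∃ a b, G.Adj a b
  · obtain ⟨a, b, hab⟩ := hedge
    exact .of_no_threeCycle_fourCycle hG ih htri hfour hab
  · push Not at hedge
    exact ⟨[], ⟨by simp, fun u v huv => absurd huv (hedge u v)⟩, by simp⟩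

/-- A counterexample with the fewest nonisolated vertices and, among these, the largest weighted
degree sum is triangle nested, since a Kelmans shift would increase the sum. -/
theorem Bridgeless.hasSmallCover [Finite V] (hG : Bridgeless G) : HasSmallCover G := by
  cases nonempty_fintype V
  obtain ⟨ρ, hρ⟩ := exists_injective_nat V
  by_contra hcover
  let μ := fun H : SimpleGraph V =>
    toLex (H.support.ncard, OrderDual.toDual (weightedDegreeSum ρ H))
  obtain ⟨G, ⟨hG, hcover⟩, hmin⟩ := Set.exists_min_image {H | Bridgeless H ∧ ¬ HasSmallCover H} μ
    (Set.toFinite _) ⟨G, hG, hcover⟩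
  have ih : ∀ H, Bridgeless H → μ H < μ G → HasSmallCover H := fun H hH hlt =>
    by_contra fun hcover => (hmin H ⟨hH, hcover⟩).not_gt hlt
  by_cases hN : IsTriangleNested ρ G
  · exact hcover (hG.hasSmallCover_of_forall_lt
      (fun H hH hlt => ih H hH (Prod.Lex.lt_iff.2 (Or.inl hlt))) hρ hN)
  simp only [IsTriangleNested, not_forall] at hN
  obtain ⟨a, b, z, x, hab, hlt, haz, hbz, hax, hxb, hbx⟩ := hN
  have hsum := weightedDegreeSum_lt_kelmansShift hab hlt hax hxb hbx
  have hsupp := Set.ncard_le_ncard (support_kelmansShift_subset hab) (Set.toFinite _)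
  exact hcover (.of_kelmansShift hab (ih _ (hG.kelmansShift hab haz hbz)
    (Prod.Lex.lt_iff.2 (hsupp.lt_or_eq.imp_right fun h => ⟨h, hsum⟩))))

lemma exists_isCycle_of_forall_isCycleList {L : List (List V)} (hL : ∀ c ∈ L, IsCycleList G c) :
    ∃ C : List (Σ v : V, G.Walk v v), C.length = L.length ∧ (∀ c ∈ C, c.2.IsCycle) ∧
      ∀ e, Covers L e → ∃ c ∈ C, e ∈ c.2.edges := by
  choose w hw hedges using fun c : {c // c ∈ L} => (hL c c.2).exists_isCycle
  refine ⟨L.attach.map w, by simp, List.forall_mem_map.2 fun c _ => hw c, ?_⟩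
  rintro e ⟨c, hc, he⟩
  exact ⟨w ⟨c, hc⟩, List.mem_map_of_mem (L.mem_attach ⟨c, hc⟩), by rwa [hedges]⟩

end CycleCover

theorem stmt_16_general {V : Type*} [Finite V] (G : SimpleGraph V)
    (hG : ∀ e ∈ G.edgeSet, ¬ G.IsBridge e) :
    ∃ C : List (Σ v : V, G.Walk v v),
      C.length ≤ 3 * (Nat.card V - 1) / 4 ∧
      (∀ c ∈ C, c.2.IsCycle) ∧
      (∀ e : Sym2 V, e ∈ G.edgeSet ↔ ∃ c ∈ C, e ∈ c.2.edges) := by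
  obtain ⟨L, hL, hlen⟩ := CycleCover.Bridgeless.hasSmallCover fun u v huv => hG s(u, v) huv
  obtain ⟨C, hlenC, hC, hcovers⟩ := CycleCover.exists_isCycle_of_forall_isCycleList hL.isCycleList
  have hcard : G.support.ncard ≤ Nat.card V := Set.ncard_le_card _
  refine ⟨C, by omega, hC, fun e => ⟨?_, fun ⟨c, _, he⟩ => c.2.edges_subset_edgeSet he⟩⟩
  induction e with
  | _ u v => exact fun huv => hcovers s(u, v) (hL.covers huv)

/-- Fan: every 2-edge-connected simple graph on n vertices can
be covered by at most ⌊3(n−1)/4⌋ cycles.  2-edge-connected means connected and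
still connected after deleting any single edge. -/
theorem stmt_16 (n : ℕ) (G : SimpleGraph (Fin n))
    (hconn : G.Connected)
    (h2edge : ∀ e ∈ G.edgeSet, (G.deleteEdges {e}).Connected) :
    ∃ C : List (Σ v : Fin n, G.Walk v v),
      C.length ≤ 3 * (n - 1) / 4 ∧
      (∀ c ∈ C, c.2.IsCycle) ∧
      (∀ e : Sym2 (Fin n), e ∈ G.edgeSet ↔ ∃ c ∈ C, e ∈ c.2.edges) := by
  simpa only [Nat.card_fin] using stmt_16_general G fun e he hbridge => by
    induction e with | _ u v => exact hbridge ((h2edge s(u, v) he).preconnected u v)
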